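/- Let 0 < α < 1 and T > 0, and let (u, p) be a strong solution of the Navier–Stokes equations on [0,T) × ℝ³ (smooth, divergence-free, with u(t,·) and p(t,·) Schwartz in x, locally uniformly in t), with vorticity ω = curl u. If the vorticity L² norm blows up at time T, i.e. limsup_{t→T⁻} ‖ω(t,·)‖_{L²} = ∞, then ∫₀ᵀ (‖ω(τ,·)‖_{Ḃ^{−α}_{∞,∞}}^{2/(2−α)} + ‖ω(τ,·)‖_{Ḃ^{−1−α}_{∞,∞}}^{2/(1−α)}) dτ = ∞. -/

import Mathlib

open MeasureTheory Real Complex Filter Function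
open scoped ENNReal FourierTransform SchwartzMap

noncomputable section

/-- The properties of the radial smooth cutoff `χ` used to build the
Littlewood–Paley decomposition: smooth, compactly supported, radial,
`0 ≤ χ ≤ 1`, `χ = 1` on `{‖ξ‖ ≤ 3/4}` and `χ = 0` on `{‖ξ‖ > 4/3}`. -/
def IsLPCutoff {n : ℕ} (χ : EuclideanSpace ℝ (Fin n) → ℝ) : Prop :=
  ContDiff ℝ ((⊤ : ℕ∞) : WithTop ℕ∞) χ ∧ HasCompactSupport χ ∧
    (∀ ξ η, ‖ξ‖ = ‖η‖ → χ ξ = χ η) ∧ (∀ ξ, 0 ≤ χ ξ) ∧ (∀ ξ, χ ξ ≤ 1) ∧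
    (∀ ξ, ‖ξ‖ ≤ 3 / 4 → χ ξ = 1) ∧ (∀ ξ, 4 / 3 < ‖ξ‖ → χ ξ = 0)

/-- The low-frequency Littlewood–Paley projection `S_j f = 𝓕⁻¹(χ(·/2^j) 𝓕 f)`. -/
def Sproj {n : ℕ} (χ : EuclideanSpace ℝ (Fin n) → ℝ) (j : ℤ)
    (f : EuclideanSpace ℝ (Fin n) → ℂ) : EuclideanSpace ℝ (Fin n) → ℂ :=
  𝓕⁻ fun ξ => ((χ ((2 : ℝ) ^ (-j) • ξ) : ℝ) : ℂ) * 𝓕 f ξ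

/-- The Littlewood–Paley block `Δ_j f = 𝓕⁻¹(φ̂(·/2^j) 𝓕 f)`, where
`φ̂(ξ) = χ(ξ/2) - χ(ξ)`, i.e. `φ̂(ξ/2^j) = χ(ξ/2^(j+1)) - χ(ξ/2^j)`. -/
def Dproj {n : ℕ} (χ : EuclideanSpace ℝ (Fin n) → ℝ) (j : ℤ)
    (f : EuclideanSpace ℝ (Fin n) → ℂ) : EuclideanSpace ℝ (Fin n) → ℂ :=
  𝓕⁻ fun ξ => ((χ ((2 : ℝ) ^ (-(j + 1)) • ξ) - χ ((2 : ℝ) ^ (-j) • ξ) : ℝ) : ℂ) * 𝓕 f ξ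

/-- The `ℓ^q(ℤ)` norm of a sequence of extended nonnegative reals, with the usual
supremum modification for `q = ∞`. -/
def lqNorm (q : ℝ≥0∞) (a : ℤ → ℝ≥0∞) : ℝ≥0∞ :=
  if q = ∞ then ⨆ j, a j else (∑' j, a j ^ q.toReal) ^ (1 / q.toReal)

/-- The homogeneous Besov norm `‖f‖_{Ḃ^s_{p,q}}`, valued in `[0,∞]`. -/
def besovNorm {n : ℕ} (χ : EuclideanSpace ℝ (Fin n) → ℝ) (s : ℝ) (p q : ℝ≥0∞)
    (f : EuclideanSpace ℝ (Fin n) → ℂ) : ℝ≥0∞ :=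
  lqNorm q fun j => (2 : ℝ≥0∞) ^ ((j : ℝ) * s) * eLpNorm (Dproj χ j f) p volume
noncomputable section

/-- Abbreviation for the Euclidean space `ℝ³`. -/
abbrev E3 := EuclideanSpace ℝ (Fin 3)

/-- The partial derivative `∂ᵢ f` in the `i`-th coordinate direction. -/
def pd (i : Fin 3) (f : E3 → ℝ) : E3 → ℝ :=
  fun x => fderiv ℝ f x (EuclideanSpace.single i 1)

/-- The curl `∇ × u = (∂₂u³ - ∂₃u², ∂₃u¹ - ∂₁u³, ∂₁u² - ∂₂u¹)` of a vector field on `ℝ³`. -/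
def curl3 (u : Fin 3 → E3 → ℝ) : Fin 3 → E3 → ℝ :=
  ![fun x => pd 1 (u 2) x - pd 2 (u 1) x,
    fun x => pd 2 (u 0) x - pd 0 (u 2) x,
    fun x => pd 0 (u 1) x - pd 1 (u 0) x]

/-- The curl of a Schwartz vector field on `ℝ³`. -/
def curlS (u : Fin 3 → 𝓢(E3, ℝ)) : Fin 3 → E3 → ℝ :=
  curl3 fun i => ⇑(u i)

/-- The `L²` norm of a vector field (the `ℓ²` combination of the componentwise norms),
valued in `[0,∞]`. -/
def vecL2 (v : Fin 3 → E3 → ℝ) : ℝ≥0∞ :=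
  (∑ i : Fin 3, eLpNorm (v i) 2 volume ^ (2 : ℝ)) ^ (1 / 2 : ℝ)

/-- The `L²` norm `‖∇v‖_{L²}` of the gradient of a vector field,
`‖∇v‖_{L²}² = Σ_{i,j} ‖∂ᵢ vʲ‖_{L²}²`, valued in `[0,∞]`. -/
def gradL2 (v : Fin 3 → E3 → ℝ) : ℝ≥0∞ :=
  (∑ i : Fin 3, ∑ j : Fin 3, eLpNorm (pd i (v j)) 2 volume ^ (2 : ℝ)) ^ (1 / 2 : ℝ)

/-- The homogeneous Besov norm `‖v‖_{Ḃ^s_{∞,∞}} = sup_j 2^{js} ‖Δ_j v‖_{L^∞}` of a real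
vector field on `ℝ³`, taken as the maximum (supremum) over the components. -/
def vecBesovInf (χ : E3 → ℝ) (s : ℝ) (v : Fin 3 → E3 → ℝ) : ℝ≥0∞ :=
  ⨆ i : Fin 3, ⨆ j : ℤ,
    (2 : ℝ≥0∞) ^ ((j : ℝ) * s) * eLpNorm (Dproj χ j fun x => ((v i x : ℝ) : ℂ)) ⊤ volume

/-- The homogeneous Besov norm `Ḃ^s_{2,2}` of a 3×3-matrix field, as the `ℓ²`
combination of the componentwise Besov norms. -/
def matBesov22 (χ : E3 → ℝ) (s : ℝ) (m : Fin 3 → Fin 3 → E3 → ℝ) : ℝ≥0∞ :=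
  (∑ i : Fin 3, ∑ j : Fin 3,
      besovNorm χ s 2 2 (fun x => ((m i j x : ℝ) : ℂ)) ^ (2 : ℝ)) ^ (1 / 2 : ℝ)

/-- The `L²` norm of `Λ^α v`, where `Λ^α f = 𝓕⁻¹(|ξ|^α 𝓕 f)` acts componentwise on the
real vector field `v`, taken as the `ℓ²` combination of the componentwise norms. -/
def vecFracLapL2 (α : ℝ) (v : Fin 3 → E3 → ℝ) : ℝ≥0∞ :=
  (∑ i : Fin 3,
      eLpNorm (𝓕⁻ fun ξ => ((‖ξ‖ ^ α : ℝ) : ℂ) * 𝓕 (fun x => ((v i x : ℝ) : ℂ)) ξ) 2 volume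
        ^ (2 : ℝ)) ^ (1 / 2 : ℝ)

/-- The vortex-stretching integral `∫ ((ω·∇)u)·ω dx` of a Schwartz vector field `u`
with vorticity `ω = curl u`. -/
def vortexStretch (u : Fin 3 → 𝓢(E3, ℝ)) : ℝ :=
  ∫ x, ∑ j : Fin 3, (∑ i : Fin 3, curlS u i x * pd i (⇑(u j)) x) * curlS u j x

/-- A **strong solution of the Navier–Stokes equations** on `[0,T) × ℝ³`: the velocity
`u` and the pressure `p` are smooth on `[0,T) × ℝ³` and Schwartz in the space variable
with all Schwartz seminorms locally bounded in time, `u(t,·)` is divergence-free, and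
`∂ₜu - Δu + (u·∇)u + ∇p = 0` on `(0,T) × ℝ³`. -/
structure IsStrongSolution (T : ℝ) (u : ℝ → Fin 3 → 𝓢(E3, ℝ)) (p : ℝ → 𝓢(E3, ℝ)) :
    Prop where
  smooth_u : ∀ i : Fin 3, ContDiffOn ℝ ((⊤ : ℕ∞) : WithTop ℕ∞)
    (fun tx : ℝ × E3 => u tx.1 i tx.2) (Set.Ico 0 T ×ˢ Set.univ)
  smooth_p : ContDiffOn ℝ ((⊤ : ℕ∞) : WithTop ℕ∞)
    (fun tx : ℝ × E3 => p tx.1 tx.2) (Set.Ico 0 T ×ˢ Set.univ)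
  locBdd_u : ∀ k l : ℕ, ∀ t ∈ Set.Ico (0 : ℝ) T, ∃ ε > 0, ∃ M : ℝ,
    ∀ s ∈ Set.Ico (0 : ℝ) T, |s - t| < ε → ∀ i, SchwartzMap.seminorm ℝ k l (u s i) ≤ M
  locBdd_p : ∀ k l : ℕ, ∀ t ∈ Set.Ico (0 : ℝ) T, ∃ ε > 0, ∃ M : ℝ,
    ∀ s ∈ Set.Ico (0 : ℝ) T, |s - t| < ε → SchwartzMap.seminorm ℝ k l (p s) ≤ M
  divFree : ∀ t ∈ Set.Ico (0 : ℝ) T, ∀ x, ∑ i : Fin 3, pd i (⇑(u t i)) x = 0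
  eqn : ∀ t ∈ Set.Ioo (0 : ℝ) T, ∀ x, ∀ j : Fin 3,
    deriv (fun s => u s j x) t - (∑ i : Fin 3, pd i (pd i (⇑(u t j))) x)
      + (∑ i : Fin 3, u t i x * pd i (⇑(u t j)) x) + pd j (⇑(p t)) x = 0

/-- The space-time integral `∫₀ᵀ (‖ω(τ)‖_{Ḃ^{-α}_{∞,∞}}^{2/(2-α)} +
‖ω(τ)‖_{Ḃ^{-1-α}_{∞,∞}}^{2/(1-α)}) dτ` of the vorticity `ω = curl u`. -/
def vortBesovIntegral (χ : E3 → ℝ) (α T : ℝ) (u : ℝ → Fin 3 → 𝓢(E3, ℝ)) : ℝ≥0∞ :=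
  ∫⁻ τ in Set.Ioo (0 : ℝ) T,
    vecBesovInf χ (-α) (curlS (u τ)) ^ (2 / (2 - α))
      + vecBesovInf χ (-1 - α) (curlS (u τ)) ^ (2 / (1 - α))

open scoped LineDeriv Topology
local notation "𝔼" n:max => EuclideanSpace ℝ (Fin n)
local notation "𝕖" i:max => EuclideanSpace.single i (1 : ℝ)

/-!
The `L²` norm of the vorticity is controlled by `‖∇u‖_{L²}`, whose evolution is
`(d/dt) ‖∇u‖² = -2 ‖∇²u‖² - 2 ∑ ∫ ∂ₖuⱼ ∂ₖuᵢ ∂ᵢuⱼ`: the pressure and transport terms integrate to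
zero because `div u = 0`.

By the Biot–Savart law each block `Δ_j ∇u` is a localized double Riesz transform of `Δ_j ω`, hence
`‖Δ_j ∇u‖_∞ ≲ 2^{jα} A` with `A = ‖ω‖_{Ḃ^{-α}_{∞,∞}}`. Split the trilinear integral at a frequency
`2^N`. Below it, one factor is put in `L^∞` and bounded by `∑_{j < N} 2^{jα} A ≲ 2^{Nα} A`, leaving
`‖∇u‖²`; above it, the block `Δ_j` of one factor in `L^∞` meets two factors of frequency at least
`2^j`, worth `4^{-j} ‖∇²u‖²`, and the sum over `j ≥ N` converges because `α < 2`. So the integral is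
`≲ A (2^{Nα} ‖∇u‖² + 2^{N(α-2)} ‖∇²u‖²)`, and the choice `2^{N(2-α)} ≈ A` absorbs the Hessian and
leaves `K A^{2/(2-α)} ‖∇u‖²`. Grönwall then keeps `‖∇u‖` bounded up to `T` as soon as
`∫ ‖ω‖_{Ḃ^{-α}_{∞,∞}}^{2/(2-α)}` is finite.
-/

section SchwartzPlancherel

variable {V F H : Type*} [NormedAddCommGroup V] [InnerProductSpace ℝ V] [FiniteDimensional ℝ V]
  [MeasurableSpace V] [BorelSpace V] [NormedAddCommGroup F] [NormedSpace ℝ F]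
  [NormedAddCommGroup H] [InnerProductSpace ℂ H]

/-- The squared `L²` norm `‖f‖²_{L²}` of a Schwartz function, as a real number. -/
def l2sq (f : 𝓢(V, F)) : ℝ := ∫ x, ‖f x‖ ^ 2

theorem l2sq_nonneg (f : 𝓢(V, F)) : 0 ≤ l2sq f :=
  integral_nonneg fun _ => by positivity

theorem integrable_norm_sq_schwartz (f : 𝓢(V, F)) : Integrable fun x => ‖f x‖ ^ 2 :=
  (memLp_two_iff_integrable_sq_norm f.continuous.aestronglyMeasurable).1 (f.memLp 2)

theorem fourier_sub_schwartz (f g : 𝓢(V, H)) : 𝓕 (f - g) = 𝓕 f - 𝓕 g :=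
  map_sub (FourierTransform.fourierCLM ℂ 𝓢(V, H)) f g

variable [CompleteSpace H]

theorem l2sq_fourier (f : 𝓢(V, H)) : l2sq (𝓕 f) = l2sq f :=
  SchwartzMap.integral_norm_sq_fourier f

theorem norm_le_integral_norm_fourier (f : 𝓢(V, H)) (x : V) : ‖f x‖ ≤ ∫ ξ, ‖𝓕 f ξ‖ := by
  conv_lhs => rw [← FourierTransform.fourierInv_fourier_eq (F := 𝓢(V, H)) f,
    SchwartzMap.fourierInv_coe, Real.fourierInv_eq]
  refine (norm_integral_le_integral_norm _).trans_eq ?_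
  simp_rw [Circle.norm_smul]

theorem fourier_fourierMultiplierCLM_apply {𝕜 : Type*} [RCLike 𝕜] [NormedSpace 𝕜 H]
    [SMulCommClass ℂ 𝕜 H] {m : V → 𝕜} (hm : m.HasTemperateGrowth) (f : 𝓢(V, H)) (ξ : V) :
    𝓕 (SchwartzMap.fourierMultiplierCLM H m f) ξ = m ξ • 𝓕 f ξ := by
  rw [SchwartzMap.fourierMultiplierCLM_apply, FourierTransform.fourier_fourierInv_eq,
    SchwartzMap.smulLeftCLM_apply_apply hm]

end SchwartzPlancherel

section LittlewoodPaley

variable {n : ℕ} {χ : 𝔼 n → ℝ}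

namespace IsLPCutoff

theorem contDiff (hχ : IsLPCutoff χ) : ContDiff ℝ ((⊤ : ℕ∞) : WithTop ℕ∞) χ := hχ.1

theorem hasCompactSupport (hχ : IsLPCutoff χ) : HasCompactSupport χ := hχ.2.1

theorem nonneg (hχ : IsLPCutoff χ) (ξ : 𝔼 n) : 0 ≤ χ ξ := hχ.2.2.2.1 ξ

theorem le_one (hχ : IsLPCutoff χ) (ξ : 𝔼 n) : χ ξ ≤ 1 := hχ.2.2.2.2.1 ξ

theorem eq_one (hχ : IsLPCutoff χ) {ξ : 𝔼 n} (hξ : ‖ξ‖ ≤ 3 / 4) : χ ξ = 1 :=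
  hχ.2.2.2.2.2.1 ξ hξ

theorem eq_zero (hχ : IsLPCutoff χ) {ξ : 𝔼 n} (hξ : 4 / 3 < ‖ξ‖) : χ ξ = 0 :=
  hχ.2.2.2.2.2.2 ξ hξ

theorem hasTemperateGrowth_comp_smul (hχ : IsLPCutoff χ) (c : ℝ) :
    (fun ξ => χ (c • ξ)).HasTemperateGrowth := by
  have : χ.HasTemperateGrowth := hχ.hasCompactSupport.hasTemperateGrowth hχ.contDiff
  fun_prop

theorem norm_one_sub_le (hχ : IsLPCutoff χ) (ξ : 𝔼 n) : ‖1 - χ ξ‖ ≤ 1 := by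
  rw [Real.norm_of_nonneg (sub_nonneg.2 (hχ.le_one ξ))]
  exact sub_le_self _ (hχ.nonneg ξ)

end IsLPCutoff

/-- The low-frequency projection `S_j` of the Littlewood–Paley decomposition, as an operator on
Schwartz functions. -/
def lowPass (χ : 𝔼 n → ℝ) (j : ℤ) : 𝓢(𝔼 n, ℂ) →L[ℝ] 𝓢(𝔼 n, ℂ) :=
  SchwartzMap.fourierMultiplierCLM ℂ fun ξ => χ ((2 : ℝ) ^ (-j) • ξ)

theorem fourier_lowPass (hχ : IsLPCutoff χ) (j : ℤ) (f : 𝓢(𝔼 n, ℂ)) (ξ : 𝔼 n) :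
    𝓕 (lowPass χ j f) ξ = χ ((2 : ℝ) ^ (-j) • ξ) • 𝓕 f ξ :=
  fourier_fourierMultiplierCLM_apply (hχ.hasTemperateGrowth_comp_smul _) f ξ

theorem fourier_sub_lowPass (hχ : IsLPCutoff χ) (j : ℤ) (f : 𝓢(𝔼 n, ℂ)) (ξ : 𝔼 n) :
    𝓕 (f - lowPass χ j f) ξ = (1 - χ ((2 : ℝ) ^ (-j) • ξ)) • 𝓕 f ξ := by
  rw [fourier_sub_schwartz, _root_.sub_apply, fourier_lowPass hχ, sub_smul, one_smul]

theorem lowPass_succ_sub_eq_Dproj (hχ : IsLPCutoff χ) (j : ℤ) (f : 𝓢(𝔼 n, ℂ)) :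
    ⇑(lowPass χ (j + 1) f - lowPass χ j f) = Dproj χ j f := by
  rw [← FourierTransform.fourierInv_fourier_eq (F := 𝓢(𝔼 n, ℂ))
    (lowPass χ (j + 1) f - lowPass χ j f), SchwartzMap.fourierInv_coe, Dproj]
  congr 1
  ext ξ
  rw [fourier_sub_schwartz, _root_.sub_apply, fourier_lowPass hχ, fourier_lowPass hχ, ← sub_smul,
    Complex.real_smul, SchwartzMap.fourier_coe]

theorem norm_fourier_sub_lowPass_le (hχ : IsLPCutoff χ) (j : ℤ) (f : 𝓢(𝔼 n, ℂ)) (ξ : 𝔼 n) :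
    ‖𝓕 (f - lowPass χ j f) ξ‖ ≤ ‖𝓕 f ξ‖ := by
  rw [fourier_sub_lowPass hχ, norm_smul]
  exact mul_le_of_le_one_left (norm_nonneg _) (hχ.norm_one_sub_le _)

theorem norm_sub_lowPass_le_integral (hχ : IsLPCutoff χ) (j : ℤ) (f : 𝓢(𝔼 n, ℂ)) (x : 𝔼 n) :
    ‖(f - lowPass χ j f) x‖ ≤ ∫ ξ, ‖𝓕 f ξ‖ :=
  (norm_le_integral_norm_fourier _ x).trans <|
    integral_mono (SchwartzMap.integrable _).norm (SchwartzMap.integrable _).norm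
      (norm_fourier_sub_lowPass_le hχ j f)

theorem l2sq_sub_lowPass_le (hχ : IsLPCutoff χ) (j : ℤ) (f : 𝓢(𝔼 n, ℂ)) :
    l2sq (f - lowPass χ j f) ≤ l2sq f := by
  rw [← l2sq_fourier, ← l2sq_fourier f]
  refine integral_mono (integrable_norm_sq_schwartz _) (integrable_norm_sq_schwartz _) fun ξ => ?_
  exact pow_le_pow_left₀ (norm_nonneg _) (norm_fourier_sub_lowPass_le hχ j f ξ) 2

theorem fourier_lineDeriv_single (i : Fin n) (f : 𝓢(𝔼 n, ℂ)) (ξ : 𝔼 n) :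
    𝓕 (∂_{𝕖 i} f) ξ = 2 * π * Complex.I * (ξ i : ℂ) * 𝓕 f ξ := by
  have : (inner ℝ · (𝕖 i : 𝔼 n)).HasTemperateGrowth := by fun_prop
  rw [SchwartzMap.fourier_lineDerivOp_eq, _root_.smul_apply,
    SchwartzMap.smulLeftCLM_apply_apply this]
  simp [EuclideanSpace.inner_single_right, mul_assoc]

theorem sum_norm_sq_fourier_lineDeriv (f : 𝓢(𝔼 n, ℂ)) (ξ : 𝔼 n) :
    ∑ i : Fin n, ‖𝓕 (∂_{𝕖 i} f) ξ‖ ^ 2 = (2 * π) ^ 2 * ‖ξ‖ ^ 2 * ‖𝓕 f ξ‖ ^ 2 := by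
  simp_rw [fourier_lineDeriv_single, norm_mul, mul_pow, ← Finset.sum_mul]
  rw [EuclideanSpace.norm_sq_eq]
  simp [← Finset.mul_sum]

/-- The squared `L²` norm `‖∇f‖²_{L²} = ∑ᵢ ‖∂ᵢf‖²_{L²}` of the gradient of a Schwartz function. -/
def gradL2sq {F : Type*} [NormedAddCommGroup F] [NormedSpace ℝ F] (f : 𝓢(𝔼 n, F)) : ℝ :=
  ∑ i : Fin n, l2sq (∂_{𝕖 i} f)

theorem gradL2sq_nonneg {F : Type*} [NormedAddCommGroup F] [NormedSpace ℝ F]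
    (f : 𝓢(𝔼 n, F)) : 0 ≤ gradL2sq f :=
  Finset.sum_nonneg fun i _ => l2sq_nonneg (∂_{𝕖 i} f)

theorem gradL2sq_eq_integral_fourier (f : 𝓢(𝔼 n, ℂ)) :
    gradL2sq f = ∫ ξ, ∑ i : Fin n, ‖𝓕 (∂_{𝕖 i} f) ξ‖ ^ 2 := by
  rw [integral_finsetSum _ fun i _ => integrable_norm_sq_schwartz _]
  exact Finset.sum_congr rfl fun i _ => (l2sq_fourier _).symm

theorem norm_sq_fourier_sub_lowPass_le (hχ : IsLPCutoff χ) (j : ℤ) (f : 𝓢(𝔼 n, ℂ)) (ξ : 𝔼 n) :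
    ‖𝓕 (f - lowPass χ j f) ξ‖ ^ 2 ≤ (4 : ℝ) ^ (-j) * ∑ i : Fin n, ‖𝓕 (∂_{𝕖 i} f) ξ‖ ^ 2 := by
  have h4 : (4 : ℝ) ^ (-j) = ((2 : ℝ) ^ (-j)) ^ 2 := by
    rw [← zpow_natCast, zpow_comm]
    norm_num
  rw [sum_norm_sq_fourier_lineDeriv, h4]
  rcases le_or_gt ‖(2 : ℝ) ^ (-j) • ξ‖ (3 / 4) with hξ | hξ
  · rw [fourier_sub_lowPass hχ, hχ.eq_one hξ, sub_self, zero_smul, norm_zero,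
      zero_pow two_ne_zero]
    positivity
  · rw [norm_smul, Real.norm_of_nonneg (by positivity)] at hξ
    have hlow : 1 ≤ 2 * π * ((2 : ℝ) ^ (-j) * ‖ξ‖) := by nlinarith [Real.pi_gt_three]
    calc ‖𝓕 (f - lowPass χ j f) ξ‖ ^ 2 ≤ ‖𝓕 f ξ‖ ^ 2 :=
          pow_le_pow_left₀ (norm_nonneg _) (norm_fourier_sub_lowPass_le hχ j f ξ) 2
      _ ≤ (2 * π * ((2 : ℝ) ^ (-j) * ‖ξ‖)) ^ 2 * ‖𝓕 f ξ‖ ^ 2 :=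
          le_mul_of_one_le_left (by positivity) (one_le_pow₀ hlow)
      _ = ((2 : ℝ) ^ (-j)) ^ 2 * ((2 * π) ^ 2 * ‖ξ‖ ^ 2 * ‖𝓕 f ξ‖ ^ 2) := by ring

theorem l2sq_sub_lowPass_le_gradL2sq (hχ : IsLPCutoff χ) (j : ℤ) (f : 𝓢(𝔼 n, ℂ)) :
    l2sq (f - lowPass χ j f) ≤ (4 : ℝ) ^ (-j) * gradL2sq f := by
  rw [← l2sq_fourier, gradL2sq_eq_integral_fourier, ← integral_const_mul]
  exact integral_mono (integrable_norm_sq_schwartz _)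
    ((integrable_finsetSum _ fun i _ => integrable_norm_sq_schwartz _).const_mul _)
    (norm_sq_fourier_sub_lowPass_le hχ j f)

theorem tendsto_cutoff_comp_smul (hχ : IsLPCutoff χ) (N : ℤ) {ξ : 𝔼 n} (hξ : ξ ≠ 0) :
    Tendsto (fun k : ℕ => χ ((2 : ℝ) ^ (-(N - k)) • ξ)) atTop (𝓝 0) := by
  have hgrow : Tendsto (fun k : ℕ => (2 : ℝ) ^ k * ((2 : ℝ) ^ (-N) * ‖ξ‖)) atTop atTop :=
    (tendsto_pow_atTop_atTop_of_one_lt one_lt_two).atTop_mul_const (by positivity)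
  refine tendsto_const_nhds.congr' ?_
  filter_upwards [hgrow.eventually_gt_atTop (4 / 3)] with k hk
  rw [hχ.eq_zero]
  rwa [norm_smul, Real.norm_of_nonneg (by positivity), neg_sub, sub_eq_add_neg,
    zpow_add₀ two_ne_zero, zpow_natCast, mul_assoc]

theorem tendsto_lowPass_sub_natCast [NeZero n] (hχ : IsLPCutoff χ) (f : 𝓢(𝔼 n, ℂ)) (N : ℤ)
    (x : 𝔼 n) : Tendsto (fun k : ℕ => lowPass χ (N - k) f x) atTop (𝓝 0) := by
  refine squeeze_zero_norm (fun k => norm_le_integral_norm_fourier (lowPass χ (N - k) f) x) ?_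
  rw [show (0 : ℝ) = ∫ _ : 𝔼 n, 0 by simp]
  refine tendsto_integral_of_dominated_convergence (fun ξ => ‖𝓕 f ξ‖)
    (fun k => (SchwartzMap.continuous _).norm.aestronglyMeasurable)
    (𝓕 f).integrable.norm (fun k => Eventually.of_forall fun ξ => ?_) ?_
  · rw [fourier_lowPass hχ, norm_norm, norm_smul, Real.norm_of_nonneg (hχ.nonneg _)]
    exact mul_le_of_le_one_left (norm_nonneg _) (hχ.le_one _)
  · filter_upwards [Measure.ae_ne volume 0] with ξ hξ
    simp_rw [fourier_lowPass hχ]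
    simpa using ((tendsto_cutoff_comp_smul hχ N hξ).smul_const (𝓕 f ξ)).norm

end LittlewoodPaley

section Trilinear

/-- The pointwise product of two Schwartz functions, again as a Schwartz function. -/
def schwartzMul {V A : Type*} [NormedAddCommGroup V] [NormedSpace ℝ V] [NormedRing A]
    [NormedAlgebra ℝ A] (f g : 𝓢(V, A)) : 𝓢(V, A) :=
  SchwartzMap.pairing (ContinuousLinearMap.mul ℝ A) f g

@[simp]
theorem schwartzMul_apply {V A : Type*} [NormedAddCommGroup V] [NormedSpace ℝ V] [NormedRing A]
    [NormedAlgebra ℝ A] (f g : 𝓢(V, A)) (x : V) : schwartzMul f g x = f x * g x := rfl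

variable {V 𝕜 : Type*} [NormedAddCommGroup V] [InnerProductSpace ℝ V] [FiniteDimensional ℝ V]
  [MeasurableSpace V] [BorelSpace V] [RCLike 𝕜]

theorem integrable_schwartz_mul (f g : 𝓢(V, 𝕜)) : Integrable fun x => f x * g x :=
  (schwartzMul f g).integrable

theorem integrable_schwartz_mul_mul (f g h : 𝓢(V, 𝕜)) : Integrable fun x => f x * g x * h x :=
  integrable_schwartz_mul (schwartzMul f g) h

theorem norm_integral_mul_mul_le {f g h : 𝓢(V, 𝕜)} {B E : ℝ} (hf : ∀ x, ‖f x‖ ≤ B)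
    (hg : l2sq g ≤ E) (hh : l2sq h ≤ E) : ‖∫ x, f x * g x * h x‖ ≤ B * E := by
  have hB : 0 ≤ B := (norm_nonneg _).trans (hf 0)
  have hpoint (x : V) : ‖f x * g x * h x‖ ≤ B * ((‖g x‖ ^ 2 + ‖h x‖ ^ 2) / 2) := by
    rw [norm_mul, norm_mul, mul_assoc]
    gcongr
    · exact hf x
    · linarith [two_mul_le_add_sq ‖g x‖ ‖h x‖]
  calc ‖∫ x, f x * g x * h x‖ ≤ ∫ x, B * ((‖g x‖ ^ 2 + ‖h x‖ ^ 2) / 2) :=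
        norm_integral_le_of_norm_le ((((integrable_norm_sq_schwartz g).add
          (integrable_norm_sq_schwartz h)).div_const 2).const_mul B) (Eventually.of_forall hpoint)
    _ = B * ((l2sq g + l2sq h) / 2) := by
        rw [integral_const_mul, integral_div, integral_add (integrable_norm_sq_schwartz g)
          (integrable_norm_sq_schwartz h)]
        rfl
    _ ≤ B * E := by gcongr; linarith

/-- The trilinear integral `∫ f₀ f₁ f₂` of three Schwartz functions. -/
def trilinearIntegral (f : Fin 3 → 𝓢(V, 𝕜)) : 𝕜 := ∫ x, f 0 x * f 1 x * f 2 x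

theorem norm_trilinearIntegral_sub_le {f g : Fin 3 → 𝓢(V, 𝕜)} {B E : ℝ}
    (hfg : ∀ i x, ‖f i x - g i x‖ ≤ B) (hf : ∀ i, l2sq (f i) ≤ E) (hg : ∀ i, l2sq (g i) ≤ E) :
    ‖trilinearIntegral f - trilinearIntegral g‖ ≤ 3 * B * E := by
  have hsplit : trilinearIntegral f - trilinearIntegral g
      = (∫ x, (f 0 - g 0) x * f 1 x * f 2 x) + (∫ x, (f 1 - g 1) x * g 0 x * f 2 x)
        + ∫ x, (f 2 - g 2) x * g 0 x * g 1 x := by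
    rw [trilinearIntegral, trilinearIntegral,
      ← integral_sub (integrable_schwartz_mul_mul _ _ _) (integrable_schwartz_mul_mul _ _ _),
      ← integral_add (integrable_schwartz_mul_mul _ _ _) (integrable_schwartz_mul_mul _ _ _),
      ← integral_add ((integrable_schwartz_mul_mul _ _ _).add (integrable_schwartz_mul_mul _ _ _))
        (integrable_schwartz_mul_mul _ _ _)]
    congr 1 with x
    simp only [_root_.sub_apply]
    ring
  have h0 := norm_integral_mul_mul_le (f := f 0 - g 0) (hfg 0) (hf 1) (hf 2)
  have h1 := norm_integral_mul_mul_le (f := f 1 - g 1) (hfg 1) (hg 0) (hf 2)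
  have h2 := norm_integral_mul_mul_le (f := f 2 - g 2) (hfg 2) (hg 0) (hg 1)
  rw [hsplit]
  linarith [norm_add₃_le (a := ∫ x, (f 0 - g 0) x * f 1 x * f 2 x)
    (b := ∫ x, (f 1 - g 1) x * g 0 x * f 2 x) (c := ∫ x, (f 2 - g 2) x * g 0 x * g 1 x)]

end Trilinear

section BlockBound

variable {n : ℕ} {χ : 𝔼 n → ℝ} {r A E D : ℝ}

/-- The Littlewood–Paley blocks of `f` satisfy `‖Δ_j f‖_{L^∞} ≤ A r^j`; for `r = 2 ^ α` this says
`‖f‖_{Ḃ^{-α}_{∞,∞}} ≤ A`. -/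
def BlockBound (χ : 𝔼 n → ℝ) (r A : ℝ) (f : 𝓢(𝔼 n, ℂ)) : Prop :=
  ∀ (j : ℤ) (x : 𝔼 n), ‖lowPass χ (j + 1) f x - lowPass χ j f x‖ ≤ A * r ^ j

theorem BlockBound.norm_lowPass_le [NeZero n] (hχ : IsLPCutoff χ) (hr : 1 < r) {f : 𝓢(𝔼 n, ℂ)}
    (hf : BlockBound χ r A f) (N : ℤ) (x : 𝔼 n) : ‖lowPass χ N f x‖ ≤ A * r ^ N / (r - 1) := by
  have hr0 : 0 < r := one_pos.trans hr
  have hstep (k : ℕ) : dist (lowPass χ (N - k) f x) (lowPass χ (N - (k + 1 : ℕ)) f x)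
      ≤ A * r ^ N * r⁻¹ * r⁻¹ ^ k := by
    have hk := hf (N - (k + 1 : ℕ)) x
    rw [show N - ((k + 1 : ℕ) : ℤ) + 1 = N - k by push_cast; ring] at hk
    rw [dist_eq_norm]
    refine hk.trans_eq ?_
    rw [zpow_sub₀ hr0.ne', zpow_natCast, pow_succ, inv_pow]
    field_simp
  have hlim := dist_le_of_le_geometric_of_tendsto₀ r⁻¹ (A * r ^ N * r⁻¹)
    (inv_lt_one_of_one_lt₀ hr) hstep (tendsto_lowPass_sub_natCast hχ f N x)
  rw [dist_zero_right, Nat.cast_zero, sub_zero] at hlim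
  refine hlim.trans_eq ?_
  have := (sub_pos.2 hr).ne'
  field_simp

theorem norm_trilinearIntegral_highPass_le (hχ : IsLPCutoff χ) (hr0 : 0 < r) (hr4 : r < 4)
    {f : Fin 3 → 𝓢(𝔼 n, ℂ)} (hf : ∀ i, BlockBound χ r A (f i)) (hfD : ∀ i, gradL2sq (f i) ≤ D)
    (N : ℤ) :
    ‖trilinearIntegral fun i => f i - lowPass χ N (f i)‖
      ≤ 3 * A * D * (r / 4) ^ N / (1 - r / 4) := by
  have hD : 0 ≤ D := (gradL2sq_nonneg _).trans (hfD 0)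
  have hL2 (i : Fin 3) (j : ℤ) : l2sq (f i - lowPass χ j (f i)) ≤ 4 ^ (-j) * D :=
    (l2sq_sub_lowPass_le_gradL2sq hχ j (f i)).trans (by gcongr; exact hfD i)
  have hL2succ (i : Fin 3) (j : ℤ) : l2sq (f i - lowPass χ (j + 1) (f i)) ≤ 4 ^ (-j) * D :=
    (hL2 i (j + 1)).trans (by gcongr <;> norm_num)
  have hstep (k : ℕ) : dist (trilinearIntegral fun i => f i - lowPass χ (N + k) (f i))
      (trilinearIntegral fun i => f i - lowPass χ (N + (k + 1 : ℕ)) (f i))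
      ≤ 3 * A * D * (r / 4) ^ N * (r / 4) ^ k := by
    have hk := norm_trilinearIntegral_sub_le (B := A * r ^ (N + k : ℤ))
      (f := fun i => f i - lowPass χ (N + k) (f i))
      (g := fun i => f i - lowPass χ (N + k + 1) (f i))
      (fun i x => by simpa using hf i (N + k) x)
      (fun i => hL2 i (N + k)) fun i => hL2succ i (N + k)
    rw [dist_eq_norm, show N + ((k + 1 : ℕ) : ℤ) = N + k + 1 by push_cast; ring]
    refine hk.trans_eq ?_
    rw [mul_assoc _ (_ ^ N), ← zpow_natCast, ← zpow_add₀ (by positivity), div_zpow, zpow_neg]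
    ring
  have hlim : Tendsto (fun k : ℕ => trilinearIntegral fun i => f i - lowPass χ (N + k) (f i))
      atTop (𝓝 0) := by
    refine squeeze_zero_norm (a := fun k : ℕ => (∫ ξ, ‖𝓕 (f 0) ξ‖) * (4 ^ (-N) * D) * (1 / 4) ^ k)
      (fun k => ?_) ?_
    · refine (norm_integral_mul_mul_le (norm_sub_lowPass_le_integral hχ (N + k) (f 0))
        (hL2 1 (N + k)) (hL2 2 (N + k))).trans_eq ?_
      rw [neg_add, zpow_add₀ four_ne_zero, zpow_neg _ (k : ℤ), zpow_natCast, one_div, inv_pow]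
      ring
    · simpa using (tendsto_pow_atTop_nhds_zero_of_lt_one (r := (1 / 4 : ℝ)) (by norm_num)
        (by norm_num)).const_mul ((∫ ξ, ‖𝓕 (f 0) ξ‖) * (4 ^ (-N) * D))
  simpa using dist_le_of_le_geometric_of_tendsto₀ (r / 4) (3 * A * D * (r / 4) ^ N)
    (by linarith) hstep hlim

theorem norm_trilinearIntegral_le [NeZero n] (hχ : IsLPCutoff χ) (hr1 : 1 < r) (hr4 : r < 4)
    {f : Fin 3 → 𝓢(𝔼 n, ℂ)} (hf : ∀ i, BlockBound χ r A (f i)) (hfE : ∀ i, l2sq (f i) ≤ E)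
    (hfD : ∀ i, gradL2sq (f i) ≤ D) (N : ℤ) :
    ‖trilinearIntegral f‖
      ≤ 3 * A * (r ^ N / (r - 1) * E + (r / 4) ^ N / (1 - r / 4) * D) := by
  have hlow : ‖trilinearIntegral f - trilinearIntegral fun i => f i - lowPass χ N (f i)‖
      ≤ 3 * (A * r ^ N / (r - 1)) * E :=
    norm_trilinearIntegral_sub_le
      (fun i x => by simpa using (hf i).norm_lowPass_le hχ hr1 N x) hfE
      fun i => (l2sq_sub_lowPass_le hχ N (f i)).trans (hfE i)
  calc ‖trilinearIntegral f‖ ≤ _ := norm_le_norm_sub_add _ _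
    _ ≤ _ := add_le_add hlow
        (norm_trilinearIntegral_highPass_le hχ (one_pos.trans hr1) hr4 hf hfD N)
    _ = _ := by ring

end BlockBound

section FourierMultiplier

variable {V F : Type*} [NormedAddCommGroup V] [InnerProductSpace ℝ V] [FiniteDimensional ℝ V]
  [MeasurableSpace V] [BorelSpace V] [NormedAddCommGroup F] [NormedSpace ℂ F]

theorem fourier_comp_smul (f : V → F) {c : ℝ} (hc : c ≠ 0) (y : V) :
    𝓕 (fun ξ => f (c • ξ)) y = |(c ^ Module.finrank ℝ V)⁻¹| • 𝓕 f (c⁻¹ • y) := by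
  rw [Real.fourier_eq, Real.fourier_eq, ← Measure.integral_comp_smul]
  congr 1 with ξ
  rw [real_inner_smul_left, real_inner_smul_right, mul_inv_cancel_left₀ hc]

theorem integral_norm_fourier_comp_smul (f : V → F) {c : ℝ} (hc : c ≠ 0) :
    ∫ y, ‖𝓕 (fun ξ => f (c • ξ)) y‖ = ∫ y, ‖𝓕 f y‖ := by
  have hcd : |c ^ Module.finrank ℝ V| ≠ 0 := abs_ne_zero.2 (pow_ne_zero _ hc)
  simp_rw [fourier_comp_smul f hc, norm_smul, Real.norm_eq_abs, abs_abs]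
  rw [integral_const_mul, Measure.integral_comp_smul volume (fun y => ‖𝓕 f y‖), smul_eq_mul,
    inv_pow, inv_inv, abs_inv, inv_mul_cancel_left₀ hcd]

theorem fourier_comp_add_right (f : V → F) (x ξ : V) :
    𝓕 (fun y => f (y + x)) ξ = 𝐞 (inner ℝ ξ x) • 𝓕 f ξ := by
  rw [real_inner_comm]
  exact congrFun (VectorFourier.fourierIntegral_comp_add_right 𝐞 volume (innerₗ V) f x) ξ

theorem fourierMultiplierCLM_apply_eq_integral (M g : 𝓢(V, ℂ)) (x : V) :
    SchwartzMap.fourierMultiplierCLM ℂ M g x = ∫ y, 𝓕 M y * g (y + x) := by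
  have htranslate (y : V) : SchwartzMap.compSubConstCLM ℂ (-x) g y = g (y + x) := by simp
  simp_rw [← htranslate]
  rw [SchwartzMap.integral_fourier_mul_eq, SchwartzMap.fourierMultiplierCLM_apply,
    SchwartzMap.fourierInv_coe, Real.fourierInv_eq]
  congr 1 with ξ
  rw [SchwartzMap.smulLeftCLM_apply_apply M.hasTemperateGrowth, SchwartzMap.fourier_coe,
    SchwartzMap.fourier_coe, funext htranslate, fourier_comp_add_right, smul_eq_mul, mul_smul_comm]

theorem norm_fourierMultiplierCLM_le (M : 𝓢(V, ℂ)) {g : 𝓢(V, ℂ)} {B : ℝ} (hg : ∀ x, ‖g x‖ ≤ B)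
    (x : V) : ‖SchwartzMap.fourierMultiplierCLM ℂ M g x‖ ≤ (∫ y, ‖𝓕 M y‖) * B := by
  rw [fourierMultiplierCLM_apply_eq_integral, ← integral_mul_const]
  refine norm_integral_le_of_norm_le ((𝓕 M).integrable.norm.mul_const _)
    (Eventually.of_forall fun y => ?_)
  rw [norm_mul]
  gcongr
  exact hg _

theorem schwartz_ext_fourier {f g : 𝓢(V, ℂ)} (h : ∀ ξ, 𝓕 f ξ = 𝓕 g ξ) : f = g :=
  (FourierTransform.fourierCLE ℂ 𝓢(V, ℂ)).injective (SchwartzMap.ext h)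

/-- The Fourier multiplier with the dyadically dilated symbol `M(2⁻ʲξ)`. -/
def dyadicMultiplier (M : 𝓢(V, ℂ)) (j : ℤ) : 𝓢(V, ℂ) →L[ℂ] 𝓢(V, ℂ) :=
  SchwartzMap.fourierMultiplierCLM ℂ fun ξ => M ((2 : ℝ) ^ (-j) • ξ)

theorem fourier_dyadicMultiplier (M : 𝓢(V, ℂ)) (j : ℤ) (f : 𝓢(V, ℂ)) (ξ : V) :
    𝓕 (dyadicMultiplier M j f) ξ = M ((2 : ℝ) ^ (-j) • ξ) * 𝓕 f ξ := by
  have hM := M.hasTemperateGrowth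
  exact fourier_fourierMultiplierCLM_apply (by fun_prop) f ξ

theorem norm_dyadicMultiplier_le (M : 𝓢(V, ℂ)) (j : ℤ) {f : 𝓢(V, ℂ)} {B : ℝ}
    (hf : ∀ x, ‖f x‖ ≤ B) (x : V) : ‖dyadicMultiplier M j f x‖ ≤ (∫ y, ‖𝓕 M y‖) * B := by
  have h2 : (2 : ℝ) ^ (-j) ≠ 0 := by positivity
  obtain ⟨Mj, hMj⟩ : ∃ Mj : 𝓢(V, ℂ), ⇑Mj = fun ξ => M ((2 : ℝ) ^ (-j) • ξ) :=
    ⟨SchwartzMap.compCLMOfContinuousLinearEquiv ℂ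
      (ContinuousLinearEquiv.smulLeft (R₁ := ℝ) (M₁ := V) (Units.mk0 _ h2)) M, rfl⟩
  have hker : ∫ y, ‖𝓕 Mj y‖ = ∫ y, ‖𝓕 M y‖ := by
    simp_rw [SchwartzMap.fourier_coe, hMj]
    exact integral_norm_fourier_comp_smul M h2
  rw [dyadicMultiplier, ← hMj, ← hker]
  exact norm_fourierMultiplierCLM_le Mj hf x

end FourierMultiplier

section LocalizedRiesz

variable {n : ℕ} {χ : 𝔼 n → ℝ}

theorem cutoff_dilation_sub_eq_one (hχ : IsLPCutoff χ) (j : ℤ) {ξ : 𝔼 n}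
    (hξ : 3 / 4 ≤ ‖(2 : ℝ) ^ (-j) • ξ‖ ∧ ‖(2 : ℝ) ^ (-j) • ξ‖ ≤ 8 / 3) :
    χ ((2 : ℝ) ^ (-(j + 2)) • ξ) - χ ((2 : ℝ) ^ (-(j - 1)) • ξ) = 1 := by
  rw [norm_smul, Real.norm_of_nonneg (by positivity)] at hξ
  rw [hχ.eq_one, hχ.eq_zero, sub_zero]
  · rw [norm_smul, Real.norm_of_nonneg (by positivity), neg_sub, sub_eq_add_neg,
      zpow_add₀ two_ne_zero]
    linarith
  · rw [norm_smul, Real.norm_of_nonneg (by positivity), neg_add, zpow_add₀ two_ne_zero,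
      show (2 : ℝ) ^ (-2 : ℤ) = 1 / 4 by norm_num]
    linarith

theorem dyadicMultiplier_lowPass_sub (hχ : IsLPCutoff χ) {M : 𝓢(𝔼 n, ℂ)}
    (hM : ∀ ξ, M ξ ≠ 0 → 3 / 4 ≤ ‖ξ‖ ∧ ‖ξ‖ ≤ 8 / 3) (j : ℤ) (f : 𝓢(𝔼 n, ℂ)) :
    dyadicMultiplier M j (lowPass χ (j + 2) f - lowPass χ (j - 1) f) = dyadicMultiplier M j f := by
  refine schwartz_ext_fourier fun ξ => ?_
  rw [fourier_dyadicMultiplier, fourier_dyadicMultiplier, fourier_sub_schwartz,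
    _root_.sub_apply, fourier_lowPass hχ, fourier_lowPass hχ, ← sub_smul]
  rcases eq_or_ne (M ((2 : ℝ) ^ (-j) • ξ)) 0 with h0 | h0
  · rw [h0, zero_mul, zero_mul]
  · rw [cutoff_dilation_sub_eq_one hχ j (hM _ h0), one_smul]

theorem BlockBound.norm_dyadicMultiplier_le (hχ : IsLPCutoff χ) {r A : ℝ} (hr : 0 < r)
    {f : 𝓢(𝔼 n, ℂ)} (hf : BlockBound χ r A f) {M : 𝓢(𝔼 n, ℂ)}
    (hM : ∀ ξ, M ξ ≠ 0 → 3 / 4 ≤ ‖ξ‖ ∧ ‖ξ‖ ≤ 8 / 3) (j : ℤ) (x : 𝔼 n) :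
    ‖dyadicMultiplier M j f x‖ ≤ (∫ y, ‖𝓕 M y‖) * ((r⁻¹ + 1 + r) * (A * r ^ j)) := by
  rw [← dyadicMultiplier_lowPass_sub hχ hM]
  refine _root_.norm_dyadicMultiplier_le M j (fun x => ?_) x
  have hnext := hf (j + 1) x
  have hprev := hf (j - 1) x
  rw [add_assoc, one_add_one_eq_two, zpow_add_one₀ hr.ne'] at hnext
  rw [sub_add_cancel, zpow_sub_one₀ hr.ne'] at hprev
  calc ‖(lowPass χ (j + 2) f - lowPass χ (j - 1) f) x‖
      = ‖(lowPass χ (j + 2) f x - lowPass χ (j + 1) f x)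
          + (lowPass χ (j + 1) f x - lowPass χ j f x)
          + (lowPass χ j f x - lowPass χ (j - 1) f x)‖ := by
        rw [_root_.sub_apply]
        congr 1
        ring
    _ ≤ _ := norm_add₃_le
    _ ≤ A * (r ^ j * r) + A * r ^ j + A * (r ^ j * r⁻¹) :=
        add_le_add (add_le_add hnext (hf j x)) hprev
    _ = (r⁻¹ + 1 + r) * (A * r ^ j) := by ring

/-- The symbol `φ̂(ξ) = χ(ξ/2) - χ(ξ)` of the Littlewood–Paley block `Δ₀`. -/
def annularCutoff (χ : 𝔼 n → ℝ) (ξ : 𝔼 n) : ℝ := χ ((2 : ℝ)⁻¹ • ξ) - χ ξ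

theorem annularCutoff_dilation (j : ℤ) (ξ : 𝔼 n) :
    annularCutoff χ ((2 : ℝ) ^ (-j) • ξ)
      = χ ((2 : ℝ) ^ (-(j + 1)) • ξ) - χ ((2 : ℝ) ^ (-j) • ξ) := by
  rw [annularCutoff, smul_smul, neg_add, zpow_add₀ two_ne_zero, zpow_neg_one, mul_comm]

theorem annularCutoff_eq_zero_of_le (hχ : IsLPCutoff χ) {ξ : 𝔼 n} (hξ : ‖ξ‖ ≤ 3 / 4) :
    annularCutoff χ ξ = 0 := by
  rw [annularCutoff, hχ.eq_one hξ, hχ.eq_one, sub_self]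
  rw [norm_smul, norm_inv, Real.norm_ofNat]
  linarith [norm_nonneg ξ]

theorem annularCutoff_eq_zero_of_lt (hχ : IsLPCutoff χ) {ξ : 𝔼 n} (hξ : 8 / 3 < ‖ξ‖) :
    annularCutoff χ ξ = 0 := by
  rw [annularCutoff, hχ.eq_zero, hχ.eq_zero, sub_self]
  · linarith
  · rw [norm_smul, norm_inv, Real.norm_ofNat]
    linarith

/-- The symbol `φ̂(ξ) ξᵢ ξₐ / |ξ|²` of the double Riesz transform localized to the unit annulus. -/
def rieszSymbol (χ : 𝔼 n → ℝ) (i a : Fin n) (ξ : 𝔼 n) : ℂ :=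
  (annularCutoff χ ξ * (ξ i * ξ a / ‖ξ‖ ^ 2) : ℝ)

theorem norm_mem_of_rieszSymbol_ne_zero (hχ : IsLPCutoff χ) (i a : Fin n) (ξ : 𝔼 n)
    (hξ : rieszSymbol χ i a ξ ≠ 0) : 3 / 4 ≤ ‖ξ‖ ∧ ‖ξ‖ ≤ 8 / 3 := by
  contrapose! hξ
  have h0 : annularCutoff χ ξ = 0 := by
    rcases lt_or_ge ‖ξ‖ (3 / 4) with h | h
    · exact annularCutoff_eq_zero_of_le hχ h.le
    · exact annularCutoff_eq_zero_of_lt hχ (hξ h)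
  rw [rieszSymbol, h0, zero_mul, Complex.ofReal_zero]

theorem contDiff_rieszSymbol (hχ : IsLPCutoff χ) (i a : Fin n) :
    ContDiff ℝ ((⊤ : ℕ∞) : WithTop ℕ∞) (rieszSymbol χ i a) := by
  rw [contDiff_iff_contDiffAt]
  intro ξ
  rcases eq_or_ne ξ 0 with rfl | hξ
  · refine (contDiffAt_const (c := (0 : ℂ))).congr_of_eventuallyEq ?_
    filter_upwards [Metric.ball_mem_nhds (0 : 𝔼 n) (show (0 : ℝ) < 3 / 4 by norm_num)] with η hη
    by_contra h
    exact (mem_ball_zero_iff.1 hη).not_ge (norm_mem_of_rieszSymbol_ne_zero hχ i a η h).1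
  · have hcut := hχ.contDiff
    unfold rieszSymbol annularCutoff
    refine Complex.ofRealCLM.contDiff.contDiffAt.comp ξ
      (.mul (by fun_prop) (.div (by fun_prop) (contDiff_norm_sq ℝ).contDiffAt (by positivity)))

theorem hasCompactSupport_rieszSymbol (hχ : IsLPCutoff χ) (i a : Fin n) :
    HasCompactSupport (rieszSymbol χ i a) :=
  .of_support_subset_isCompact (isCompact_closedBall 0 (8 / 3)) fun ξ hξ =>
    mem_closedBall_zero_iff.2 (norm_mem_of_rieszSymbol_ne_zero hχ i a ξ hξ).2

/-- The localized double Riesz symbol `rieszSymbol χ i a` as a Schwartz function. -/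
def rieszSchwartz (hχ : IsLPCutoff χ) (i a : Fin n) : 𝓢(𝔼 n, ℂ) :=
  (hasCompactSupport_rieszSymbol hχ i a).toSchwartzMap (contDiff_rieszSymbol hχ i a)

theorem rieszSchwartz_smul_mul_norm_sq (hχ : IsLPCutoff χ) (i a : Fin n) {c : ℝ} (hc : c ≠ 0)
    (ξ : 𝔼 n) : rieszSchwartz hχ i a (c • ξ) * (‖ξ‖ : ℂ) ^ 2
      = (annularCutoff χ (c • ξ) : ℂ) * (ξ i * ξ a) := by
  change rieszSymbol χ i a (c • ξ) * (‖ξ‖ : ℂ) ^ 2 = _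
  rcases eq_or_ne ξ 0 with rfl | hξ
  · simp
  · have : ‖ξ‖ ≠ 0 := norm_ne_zero_iff.2 hξ
    have hreal : annularCutoff χ (c • ξ) * ((c • ξ) i * (c • ξ) a / ‖c • ξ‖ ^ 2) * ‖ξ‖ ^ 2
        = annularCutoff χ (c • ξ) * (ξ i * ξ a) := by
      rw [norm_smul, mul_pow, Real.norm_eq_abs, sq_abs]
      simp only [PiLp.smul_apply, smul_eq_mul]
      field_simp
    rw [rieszSymbol]
    exact_mod_cast hreal

end LocalizedRiesz

section BiotSavart

variable {n : ℕ} {χ : 𝔼 n → ℝ} {U : Fin n → 𝓢(𝔼 n, ℂ)}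

theorem sum_coord_mul_fourier_eq_zero (hdiv : ∑ i : Fin n, ∂_{𝕖 i} (U i) = 0) (ξ : 𝔼 n) :
    ∑ a, (ξ a : ℂ) * 𝓕 (U a) ξ = 0 := by
  have hfourier : 𝓕 (∑ i : Fin n, ∂_{𝕖 i} (U i)) ξ = 0 := by
    rw [hdiv, FourierTransform.fourier_zero]
    rfl
  rw [FourierTransform.fourier_sum, _root_.sum_apply] at hfourier
  simp_rw [fourier_lineDeriv_single, mul_assoc _ (Complex.ofReal _), ← Finset.mul_sum] at hfourier
  exact (mul_eq_zero.1 hfourier).resolve_left (by simp [Real.pi_ne_zero])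

/-- The antisymmetrized gradient `∂ₐU_b - ∂_bUₐ`, i.e. the vorticity of `U` as a 2-form. -/
def vorticityForm {F : Type*} [NormedAddCommGroup F] [NormedSpace ℝ F] (U : Fin n → 𝓢(𝔼 n, F))
    (a b : Fin n) : 𝓢(𝔼 n, F) :=
  ∂_{𝕖 a} (U b) - ∂_{𝕖 b} (U a)

theorem fourier_vorticityForm (a b : Fin n) (ξ : 𝔼 n) :
    𝓕 (vorticityForm U a b) ξ
      = 2 * π * Complex.I * (ξ a * 𝓕 (U b) ξ - ξ b * 𝓕 (U a) ξ) := by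
  rw [vorticityForm, fourier_sub_schwartz, _root_.sub_apply, fourier_lineDeriv_single,
    fourier_lineDeriv_single]
  ring

-- The Fourier side of the Biot–Savart law `∂ᵢU_b = ∂ᵢ∂ₐ Δ⁻¹ (∂ₐU_b - ∂_bUₐ)`.
theorem norm_sq_mul_fourier_lineDeriv (hdiv : ∑ i : Fin n, ∂_{𝕖 i} (U i) = 0) (i b : Fin n)
    (ξ : 𝔼 n) : (‖ξ‖ : ℂ) ^ 2 * 𝓕 (∂_{𝕖 i} (U b)) ξ
      = ∑ a, (ξ i * ξ a) * 𝓕 (vorticityForm U a b) ξ := by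
  have hnorm : (‖ξ‖ : ℂ) ^ 2 = ∑ a, (ξ a : ℂ) ^ 2 := by
    rw [← Complex.ofReal_pow, EuclideanSpace.norm_sq_eq]
    simp [← Complex.ofReal_pow]
  have hexpand : ∑ a, (ξ i * ξ a : ℂ) * 𝓕 (vorticityForm U a b) ξ
      = 2 * π * Complex.I * ξ i * ((∑ a, (ξ a : ℂ) ^ 2) * 𝓕 (U b) ξ
        - ξ b * ∑ a, (ξ a : ℂ) * 𝓕 (U a) ξ) := by
    rw [Finset.sum_mul, Finset.mul_sum, ← Finset.sum_sub_distrib, Finset.mul_sum]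
    refine Finset.sum_congr rfl fun a _ => ?_
    rw [fourier_vorticityForm]
    ring
  rw [hexpand, sum_coord_mul_fourier_eq_zero hdiv, fourier_lineDeriv_single, hnorm]
  ring

theorem lowPass_succ_sub_lineDeriv_eq_sum (hχ : IsLPCutoff χ)
    (hdiv : ∑ i : Fin n, ∂_{𝕖 i} (U i) = 0) (i b : Fin n) (j : ℤ) :
    lowPass χ (j + 1) (∂_{𝕖 i} (U b)) - lowPass χ j (∂_{𝕖 i} (U b))
      = ∑ a, dyadicMultiplier (rieszSchwartz hχ i a) j (vorticityForm U a b) := by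
  refine schwartz_ext_fourier fun ξ => ?_
  rw [fourier_sub_schwartz, _root_.sub_apply, fourier_lowPass hχ, fourier_lowPass hχ, ← sub_smul,
    ← annularCutoff_dilation, FourierTransform.fourier_sum, _root_.sum_apply, Complex.real_smul]
  simp_rw [fourier_dyadicMultiplier]
  rcases eq_or_ne ξ 0 with rfl | hξ
  · simp [fourier_vorticityForm, fourier_lineDeriv_single]
  · have hnorm : (‖ξ‖ : ℂ) ^ 2 ≠ 0 := by simpa using hξ
    refine mul_left_cancel₀ hnorm ?_
    rw [mul_left_comm, norm_sq_mul_fourier_lineDeriv hdiv, Finset.mul_sum, Finset.mul_sum]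
    refine Finset.sum_congr rfl fun a _ => ?_
    linear_combination (-𝓕 (vorticityForm U a b) ξ) *
      rieszSchwartz_smul_mul_norm_sq hχ i a (c := 2 ^ (-j)) (by positivity) ξ

theorem exists_blockBound_lineDeriv (hχ : IsLPCutoff χ) {r : ℝ} (hr : 0 < r) :
    ∃ C, 0 ≤ C ∧ ∀ {U : Fin n → 𝓢(𝔼 n, ℂ)} {A : ℝ}, 0 ≤ A → ∑ i : Fin n, ∂_{𝕖 i} (U i) = 0 →
      (∀ a b, BlockBound χ r A (vorticityForm U a b)) →
      ∀ i b : Fin n, BlockBound χ r (C * A) (∂_{𝕖 i} (U b)) := by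
  have hker (i a : Fin n) : 0 ≤ ∫ y, ‖𝓕 (rieszSchwartz hχ i a) y‖ :=
    integral_nonneg fun _ => norm_nonneg _
  have hsum (i : Fin n) : 0 ≤ ∑ a, ∫ y, ‖𝓕 (rieszSchwartz hχ i a) y‖ :=
    Finset.sum_nonneg fun a _ => hker i a
  refine ⟨(∑ i, ∑ a, ∫ y, ‖𝓕 (rieszSchwartz hχ i a) y‖) * (r⁻¹ + 1 + r),
    mul_nonneg (Finset.sum_nonneg fun i _ => hsum i) (by positivity), ?_⟩
  intro U A hA hdiv hW i b j x
  rw [← _root_.sub_apply, lowPass_succ_sub_lineDeriv_eq_sum hχ hdiv, _root_.sum_apply]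
  calc ‖∑ a, dyadicMultiplier (rieszSchwartz hχ i a) j (vorticityForm U a b) x‖
      ≤ ∑ a, (∫ y, ‖𝓕 (rieszSchwartz hχ i a) y‖) * ((r⁻¹ + 1 + r) * (A * r ^ j)) :=
        norm_sum_le_of_le _ fun a _ => (hW a b).norm_dyadicMultiplier_le hχ hr
          (norm_mem_of_rieszSymbol_ne_zero hχ i a) j x
    _ = (∑ a, ∫ y, ‖𝓕 (rieszSchwartz hχ i a) y‖) * ((r⁻¹ + 1 + r) * (A * r ^ j)) := by
        rw [Finset.sum_mul]
    _ ≤ (∑ i, ∑ a, ∫ y, ‖𝓕 (rieszSchwartz hχ i a) y‖) * ((r⁻¹ + 1 + r) * (A * r ^ j)) := by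
        refine mul_le_mul_of_nonneg_right ?_ (by positivity)
        exact Finset.single_le_sum (fun i _ => hsum i) (Finset.mem_univ i)
    _ = _ := by ring

end BiotSavart

section RealVectorField

/-- A real-valued Schwartz function regarded as a complex-valued one. -/
def complexify {V : Type*} [NormedAddCommGroup V] [NormedSpace ℝ V] : 𝓢(V, ℝ) →L[ℝ] 𝓢(V, ℂ) :=
  SchwartzMap.postcompCLM Complex.ofRealCLM

@[simp]
theorem complexify_apply {V : Type*} [NormedAddCommGroup V] [NormedSpace ℝ V] (f : 𝓢(V, ℝ))
    (x : V) : complexify f x = (f x : ℂ) := rfl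

theorem lineDerivOp_complexify {V : Type*} [NormedAddCommGroup V] [NormedSpace ℝ V] (v : V)
    (f : 𝓢(V, ℝ)) : ∂_{v} (complexify f) = complexify (∂_{v} f) := by
  ext x
  have hcomp := (Complex.ofRealCLM.hasFDerivAt.comp x f.differentiableAt.hasFDerivAt).fderiv
  rw [SchwartzMap.lineDerivOp_apply_eq_fderiv, complexify_apply,
    SchwartzMap.lineDerivOp_apply_eq_fderiv]
  exact DFunLike.congr_fun hcomp v

theorem trilinearIntegral_complexify {V : Type*} [NormedAddCommGroup V] [InnerProductSpace ℝ V]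
    [FiniteDimensional ℝ V] [MeasurableSpace V] [BorelSpace V] (f : Fin 3 → 𝓢(V, ℝ)) :
    trilinearIntegral (fun i => complexify (f i)) = ((trilinearIntegral f : ℝ) : ℂ) := by
  simp only [trilinearIntegral, complexify_apply, ← Complex.ofReal_mul]
  exact integral_complex_ofReal

variable {n : ℕ}

theorem l2sq_complexify (f : 𝓢(𝔼 n, ℝ)) : l2sq (complexify f) = l2sq f := by
  simp only [l2sq, complexify_apply, Complex.norm_real]

theorem gradL2sq_complexify (f : 𝓢(𝔼 n, ℝ)) : gradL2sq (complexify f) = gradL2sq f := by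
  simp only [gradL2sq, lineDerivOp_complexify, l2sq_complexify]

theorem vorticityForm_complexify (U : Fin n → 𝓢(𝔼 n, ℝ)) (a b : Fin n) :
    vorticityForm (fun i => complexify (U i)) a b = complexify (vorticityForm U a b) := by
  rw [vorticityForm, vorticityForm, map_sub, lineDerivOp_complexify, lineDerivOp_complexify]

/-- The squared norm `‖∇U‖²_{L²}` of the gradient of a vector field. -/
def gradSq (U : Fin n → 𝓢(𝔼 n, ℝ)) : ℝ := ∑ j, gradL2sq (U j)

/-- The squared norm `‖∇²U‖²_{L²}` of the Hessian of a vector field. -/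
def hessSq (U : Fin n → 𝓢(𝔼 n, ℝ)) : ℝ := ∑ k : Fin n, gradSq fun j => ∂_{𝕖 k} (U j)

/-- The form `∑ ∫ ∂ₖUⱼ ∂ₖUᵢ ∂ᵢUⱼ`, the contribution of the nonlinear term to the evolution of
`‖∇U‖²_{L²}`. -/
def stretchForm (U : Fin n → 𝓢(𝔼 n, ℝ)) : ℝ :=
  ∑ k : Fin n, ∑ j : Fin n, ∑ i : Fin n,
    trilinearIntegral ![∂_{𝕖 k} (U j), ∂_{𝕖 k} (U i), ∂_{𝕖 i} (U j)]

theorem gradSq_nonneg (U : Fin n → 𝓢(𝔼 n, ℝ)) : 0 ≤ gradSq U :=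
  Finset.sum_nonneg fun j _ => gradL2sq_nonneg (U j)

theorem hessSq_nonneg (U : Fin n → 𝓢(𝔼 n, ℝ)) : 0 ≤ hessSq U :=
  Finset.sum_nonneg fun k _ => gradSq_nonneg fun j => ∂_{𝕖 k} (U j)

theorem gradL2sq_le_gradSq (U : Fin n → 𝓢(𝔼 n, ℝ)) (j : Fin n) : gradL2sq (U j) ≤ gradSq U :=
  Finset.single_le_sum (f := fun j => gradL2sq (U j)) (fun j _ => gradL2sq_nonneg (U j))
    (Finset.mem_univ j)

theorem l2sq_lineDerivOp_le_gradSq (U : Fin n → 𝓢(𝔼 n, ℝ)) (k j : Fin n) :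
    l2sq (∂_{𝕖 k} (U j)) ≤ gradSq U :=
  (Finset.single_le_sum (f := fun k : Fin n => l2sq (∂_{𝕖 k} (U j))) (fun _ _ => l2sq_nonneg _)
    (Finset.mem_univ k)).trans (gradL2sq_le_gradSq U j)

theorem gradL2sq_lineDerivOp_le_hessSq (U : Fin n → 𝓢(𝔼 n, ℝ)) (k j : Fin n) :
    gradL2sq (∂_{𝕖 k} (U j)) ≤ hessSq U :=
  (gradL2sq_le_gradSq (fun j => ∂_{𝕖 k} (U j)) j).trans
    (Finset.single_le_sum (f := fun k : Fin n => gradSq fun j => ∂_{𝕖 k} (U j))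
      (fun _ _ => gradSq_nonneg _) (Finset.mem_univ k))

end RealVectorField

section StretchingEstimate

variable {n : ℕ} {χ : 𝔼 n → ℝ}

theorem abs_stretchForm_le [NeZero n] (hχ : IsLPCutoff χ) {r B : ℝ} (hr1 : 1 < r) (hr4 : r < 4)
    {U : Fin n → 𝓢(𝔼 n, ℝ)}
    (hU : ∀ k j : Fin n, BlockBound χ r B (complexify (∂_{𝕖 k} (U j)))) (N : ℤ) :
    |stretchForm U| ≤ n ^ 3 *
      (3 * B * (r ^ N / (r - 1) * gradSq U + (r / 4) ^ N / (1 - r / 4) * hessSq U)) := by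
  set R := 3 * B * (r ^ N / (r - 1) * gradSq U + (r / 4) ^ N / (1 - r / 4) * hessSq U)
  have hterm (k j i : Fin n) :
      ‖trilinearIntegral ![∂_{𝕖 k} (U j), ∂_{𝕖 k} (U i), ∂_{𝕖 i} (U j)]‖ ≤ R := by
    rw [← Complex.norm_real, ← trilinearIntegral_complexify]
    refine norm_trilinearIntegral_le hχ hr1 hr4 (fun m => ?_) (fun m => ?_) (fun m => ?_) N
    · fin_cases m <;> exact hU _ _
    · rw [l2sq_complexify]
      fin_cases m <;> exact l2sq_lineDerivOp_le_gradSq U _ _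
    · rw [gradL2sq_complexify]
      fin_cases m <;> exact gradL2sq_lineDerivOp_le_hessSq U _ _
  calc |stretchForm U| ≤ ∑ _k : Fin n, ∑ _j : Fin n, ∑ _i : Fin n, R := by
        rw [← Real.norm_eq_abs]
        exact norm_sum_le_of_le _ fun k _ => norm_sum_le_of_le _ fun j _ =>
          norm_sum_le_of_le _ fun i _ => hterm k j i
    _ = n ^ 3 * R := by
        simp only [Finset.sum_const, Finset.card_univ, Fintype.card_fin, nsmul_eq_mul]
        ring

theorem exists_abs_stretchForm_le [NeZero n] (hχ : IsLPCutoff χ) {r : ℝ} (hr1 : 1 < r)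
    (hr4 : r < 4) :
    ∃ C, 0 ≤ C ∧ ∀ {U : Fin n → 𝓢(𝔼 n, ℝ)} {A : ℝ}, 0 ≤ A → ∑ i : Fin n, ∂_{𝕖 i} (U i) = 0 →
      (∀ a b, BlockBound χ r A (complexify (vorticityForm U a b))) →
      ∀ N : ℤ, |stretchForm U| ≤ C * A * (r ^ N * gradSq U + (r / 4) ^ N * hessSq U) := by
  obtain ⟨C, hC, hblock⟩ := exists_blockBound_lineDeriv hχ (one_pos.trans hr1)
  have hlow : 0 ≤ 1 / (r - 1) := one_div_nonneg.2 (by linarith)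
  have hhigh : 0 ≤ 1 / (1 - r / 4) := one_div_nonneg.2 (by linarith)
  refine ⟨n ^ 3 * (3 * C * (1 / (r - 1) + 1 / (1 - r / 4))), by positivity, ?_⟩
  intro U A hA hdiv hvort N
  have hdivC : ∑ i : Fin n, ∂_{𝕖 i} (complexify (U i)) = 0 := by
    simp only [lineDerivOp_complexify, ← map_sum, hdiv, map_zero]
  have hU (k j : Fin n) : BlockBound χ r (C * A) (complexify (∂_{𝕖 k} (U j))) := by
    rw [← lineDerivOp_complexify]
    exact hblock (U := fun i => complexify (U i)) hA hdivC
      (fun a b => vorticityForm_complexify U a b ▸ hvort a b) k j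
  have hG := gradSq_nonneg U
  have hH := hessSq_nonneg U
  calc |stretchForm U| ≤ _ := abs_stretchForm_le hχ hr1 hr4 hU N
    _ = n ^ 3 * (3 * C * A * (1 / (r - 1) * (r ^ N * gradSq U)
          + 1 / (1 - r / 4) * ((r / 4) ^ N * hessSq U))) := by ring
    _ ≤ n ^ 3 * (3 * C * A * ((1 / (r - 1) + 1 / (1 - r / 4)) * (r ^ N * gradSq U)
          + (1 / (r - 1) + 1 / (1 - r / 4)) * ((r / 4) ^ N * hessSq U))) := by
        gcongr
        · exact le_add_of_nonneg_right hhigh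
        · exact le_add_of_nonneg_left hlow
    _ = _ := by ring

theorem exists_zpow_ge_and_rpow_zpow_le {s X β : ℝ} (hs : 1 < s) (hX : 0 < X) (hβ : 0 ≤ β) :
    ∃ N : ℤ, X ≤ s ^ N ∧ (s ^ β) ^ N ≤ s ^ β * X ^ β := by
  obtain ⟨m, hlt, hle⟩ := exists_mem_Ioc_zpow hX hs
  have hs0 : 0 < s := one_pos.trans hs
  refine ⟨m + 1, hle, ?_⟩
  rw [zpow_add_one₀ (by positivity), mul_comm, ← Real.rpow_intCast, ← Real.rpow_mul hs0.le,
    mul_comm β, Real.rpow_mul hs0.le, Real.rpow_intCast]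
  gcongr

/-- The frequency `2 ^ N` is chosen so that the Hessian is absorbed with constant one. -/
theorem exists_zpow_balance {α X : ℝ} (hα : 0 < α) (hα2 : α < 2) (hX : 0 < X) :
    ∃ N : ℤ, X * (2 ^ α / 4) ^ N ≤ 1 ∧ X * ((2 : ℝ) ^ α) ^ N ≤ 2 ^ α * X ^ (2 / (2 - α)) := by
  have h2α : 0 < 2 - α := by linarith
  obtain ⟨N, hge, hle⟩ := exists_zpow_ge_and_rpow_zpow_le (s := 2 ^ (2 - α)) (β := α / (2 - α))
    (Real.one_lt_rpow one_lt_two h2α) hX (by positivity)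
  rw [← Real.rpow_mul two_pos.le, mul_div_cancel₀ _ h2α.ne'] at hle
  refine ⟨N, ?_, ?_⟩
  · have hinv : (2 : ℝ) ^ α / 4 = (2 ^ (2 - α))⁻¹ := by
      rw [Real.rpow_sub two_pos, inv_div]
      norm_num
    rw [hinv, inv_zpow, ← div_eq_mul_inv]
    exact div_le_one_of_le₀ hge (by positivity)
  · calc X * ((2 : ℝ) ^ α) ^ N ≤ X * (2 ^ α * X ^ (α / (2 - α))) := by gcongr
      _ = 2 ^ α * (X ^ (1 : ℝ) * X ^ (α / (2 - α))) := by rw [Real.rpow_one]; ring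
      _ = 2 ^ α * X ^ (2 / (2 - α)) := by
        rw [← Real.rpow_add hX]
        congr 2
        field_simp
        ring

theorem exists_abs_stretchForm_le_rpow [NeZero n] (hχ : IsLPCutoff χ) {α : ℝ} (hα : 0 < α)
    (hα2 : α < 2) :
    ∃ K, 0 ≤ K ∧ ∀ {U : Fin n → 𝓢(𝔼 n, ℝ)} {A : ℝ}, 0 ≤ A → ∑ i : Fin n, ∂_{𝕖 i} (U i) = 0 →
      (∀ a b, BlockBound χ (2 ^ α) A (complexify (vorticityForm U a b))) →
      |stretchForm U| ≤ K * A ^ (2 / (2 - α)) * gradSq U + hessSq U := by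
  have hr1 : (1 : ℝ) < 2 ^ α := Real.one_lt_rpow one_lt_two hα
  have hr4 : (2 : ℝ) ^ α < 4 :=
    (Real.rpow_lt_rpow_of_exponent_lt one_lt_two hα2).trans_eq (by norm_num)
  obtain ⟨C, hC, hle⟩ := exists_abs_stretchForm_le hχ hr1 hr4
  refine ⟨2 ^ α * C ^ (2 / (2 - α)), by positivity, ?_⟩
  intro U A hA hdiv hvort
  have hG := gradSq_nonneg U
  have hH := hessSq_nonneg U
  rcases (mul_nonneg hC hA).eq_or_lt with hzero | hpos
  · have hN := hle hA hdiv hvort 0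
    rw [← hzero, zero_mul] at hN
    exact hN.trans (by positivity)
  · obtain ⟨N, hhess, hgrad⟩ := exists_zpow_balance hα hα2 hpos
    rw [Real.mul_rpow hC hA] at hgrad
    calc |stretchForm U| ≤ _ := hle hA hdiv hvort N
      _ = C * A * ((2 : ℝ) ^ α) ^ N * gradSq U + C * A * (2 ^ α / 4) ^ N * hessSq U := by ring
      _ ≤ 2 ^ α * (C ^ (2 / (2 - α)) * A ^ (2 / (2 - α))) * gradSq U + 1 * hessSq U := by gcongr
      _ = _ := by ring

end StretchingEstimate

section EnergyIdentity

theorem lineDerivOp_comm {V F : Type*} [NormedAddCommGroup V] [NormedSpace ℝ V]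
    [NormedAddCommGroup F] [NormedSpace ℝ F] (v w : V) (f : 𝓢(V, F)) :
    ∂_{v} (∂_{w} f) = ∂_{w} (∂_{v} f) := by
  have hdiff : Differentiable ℝ (fderiv ℝ f) :=
    ((f.smooth 2).fderiv_right (m := 1) le_rfl).differentiable one_ne_zero
  have hsnd (a b : V) (x : V) : ∂_{a} (∂_{b} f) x = fderiv ℝ (fderiv ℝ f) x a b := by
    have hclm := ((hdiff x).hasFDerivAt.clm_apply (hasFDerivAt_const b x)).fderiv
    rw [SchwartzMap.lineDerivOp_apply_eq_fderiv]
    exact (DFunLike.congr_fun hclm a).trans (by simp)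
  ext x
  rw [hsnd, hsnd]
  exact (f.smooth 2).contDiffAt.isSymmSndFDerivAt (by simp) v w

theorem lineDerivOp_sub {V F : Type*} [NormedAddCommGroup V] [NormedSpace ℝ V]
    [NormedAddCommGroup F] [NormedSpace ℝ F] (v : V) (f g : 𝓢(V, F)) :
    ∂_{v} (f - g) = ∂_{v} f - ∂_{v} g := by
  rw [sub_eq_add_neg, LineDeriv.lineDerivOp_add, LineDeriv.lineDerivOp_neg, ← sub_eq_add_neg]

theorem lineDerivOp_schwartzMul {V A : Type*} [NormedAddCommGroup V] [NormedSpace ℝ V]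
    [NormedRing A] [NormedAlgebra ℝ A] (v : V) (f g : 𝓢(V, A)) :
    ∂_{v} (schwartzMul f g) = schwartzMul f (∂_{v} g) + schwartzMul (∂_{v} f) g := by
  ext x
  have hmul := (f.differentiableAt (x := x)).hasFDerivAt.mul' g.differentiableAt.hasFDerivAt
  exact DFunLike.congr_fun hmul.fderiv v

section Pairing

variable {V : Type*} [NormedAddCommGroup V] [InnerProductSpace ℝ V] [FiniteDimensional ℝ V]
  [MeasurableSpace V] [BorelSpace V]

/-- The `L²` inner product `⟨f, g⟩ = ∫ f g` of real Schwartz functions, as a functional of `g`. -/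
def l2Pairing (f : 𝓢(V, ℝ)) : 𝓢(V, ℝ) →L[ℝ] ℝ :=
  SchwartzMap.integralCLM ℝ volume ∘L SchwartzMap.pairing (ContinuousLinearMap.mul ℝ ℝ) f

theorem l2Pairing_apply (f g : 𝓢(V, ℝ)) : l2Pairing f g = ∫ x, f x * g x := rfl

theorem l2Pairing_self (f : 𝓢(V, ℝ)) : l2Pairing f f = l2sq f := by
  simp only [l2Pairing_apply, l2sq, Real.norm_eq_abs, sq_abs, ← sq]

theorem l2Pairing_comm (f g : 𝓢(V, ℝ)) : l2Pairing f g = l2Pairing g f := by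
  simp only [l2Pairing_apply, mul_comm]

theorem l2Pairing_lineDerivOp (f g : 𝓢(V, ℝ)) (v : V) :
    l2Pairing f (∂_{v} g) = -l2Pairing (∂_{v} f) g :=
  SchwartzMap.integral_mul_lineDerivOp_right_eq_neg_left f g v

theorem two_mul_l2Pairing_schwartzMul_lineDerivOp (f w : 𝓢(V, ℝ)) (v : V) :
    2 * l2Pairing f (schwartzMul w (∂_{v} f)) = -l2Pairing (schwartzMul f f) (∂_{v} w) := by
  have hparts : l2Pairing (schwartzMul w f) (∂_{v} f)
      = -(l2Pairing f (schwartzMul w (∂_{v} f)) + l2Pairing f (schwartzMul (∂_{v} w) f)) := by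
    rw [l2Pairing_lineDerivOp, l2Pairing_comm, lineDerivOp_schwartzMul, map_add]
  have hleft : l2Pairing (schwartzMul w f) (∂_{v} f) = l2Pairing f (schwartzMul w (∂_{v} f)) := by
    simp only [l2Pairing_apply, schwartzMul_apply]
    exact integral_congr_ae (Eventually.of_forall fun x => by ring)
  have hright : l2Pairing f (schwartzMul (∂_{v} w) f) = l2Pairing (schwartzMul f f) (∂_{v} w) := by
    simp only [l2Pairing_apply, schwartzMul_apply]
    exact integral_congr_ae (Eventually.of_forall fun x => by ring)
  linarith

end Pairing

variable {n : ℕ} {U : Fin n → 𝓢(𝔼 n, ℝ)}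

theorem sum_l2Pairing_transport_eq_zero (hdiv : ∑ i : Fin n, ∂_{𝕖 i} (U i) = 0) (f : 𝓢(𝔼 n, ℝ)) :
    ∑ i : Fin n, l2Pairing f (schwartzMul (U i) (∂_{𝕖 i} f)) = 0 := by
  have htwo : 2 * ∑ i : Fin n, l2Pairing f (schwartzMul (U i) (∂_{𝕖 i} f)) = 0 := by
    simp only [Finset.mul_sum, two_mul_l2Pairing_schwartzMul_lineDerivOp, Finset.sum_neg_distrib]
    rw [← map_sum, hdiv, map_zero, neg_zero]
  linarith

theorem sum_l2Pairing_grad_eq_zero (hdiv : ∑ i : Fin n, ∂_{𝕖 i} (U i) = 0) (p : 𝓢(𝔼 n, ℝ)) :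
    ∑ j : Fin n, l2Pairing (U j) (∂_{𝕖 j} p) = 0 := by
  have hparts (j : Fin n) : l2Pairing (U j) (∂_{𝕖 j} p) = -l2Pairing p (∂_{𝕖 j} (U j)) := by
    rw [l2Pairing_lineDerivOp, l2Pairing_comm]
  simp only [hparts, Finset.sum_neg_distrib]
  rw [← map_sum, hdiv, map_zero, neg_zero]

theorem sum_l2Pairing_lineDerivOp_lineDerivOp (f : 𝓢(𝔼 n, ℝ)) :
    ∑ i : Fin n, l2Pairing f (∂_{𝕖 i} (∂_{𝕖 i} f)) = -gradL2sq f := by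
  simp only [l2Pairing_lineDerivOp, l2Pairing_self, Finset.sum_neg_distrib, gradL2sq]

/-- The right-hand side `Δu - (u·∇)u - ∇p` of the Navier–Stokes equations. -/
def nsRhs (U : Fin n → 𝓢(𝔼 n, ℝ)) (p : 𝓢(𝔼 n, ℝ)) (j : Fin n) : 𝓢(𝔼 n, ℝ) :=
  ∑ i : Fin n, ∂_{𝕖 i} (∂_{𝕖 i} (U j)) - ∑ i : Fin n, schwartzMul (U i) (∂_{𝕖 i} (U j)) - ∂_{𝕖 j} p

theorem lineDerivOp_nsRhs (U : Fin n → 𝓢(𝔼 n, ℝ)) (p : 𝓢(𝔼 n, ℝ)) (k j : Fin n) :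
    ∂_{𝕖 k} (nsRhs U p j) = ∑ i : Fin n, ∂_{𝕖 i} (∂_{𝕖 i} (∂_{𝕖 k} (U j)))
      - ∑ i : Fin n, (schwartzMul (U i) (∂_{𝕖 i} (∂_{𝕖 k} (U j)))
        + schwartzMul (∂_{𝕖 k} (U i)) (∂_{𝕖 i} (U j)))
      - ∂_{𝕖 j} (∂_{𝕖 k} p) := by
  simp only [nsRhs, lineDerivOp_sub, LineDeriv.lineDerivOp_sum, lineDerivOp_schwartzMul,
    lineDerivOp_comm (𝕖 k)]

theorem l2Pairing_lineDerivOp_nsRhs (hdiv : ∑ i : Fin n, ∂_{𝕖 i} (U i) = 0) (p : 𝓢(𝔼 n, ℝ))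
    (k j : Fin n) :
    l2Pairing (∂_{𝕖 k} (U j)) (∂_{𝕖 k} (nsRhs U p j)) = -gradL2sq (∂_{𝕖 k} (U j))
      - ∑ i : Fin n, trilinearIntegral ![∂_{𝕖 k} (U j), ∂_{𝕖 k} (U i), ∂_{𝕖 i} (U j)]
      - l2Pairing (∂_{𝕖 k} (U j)) (∂_{𝕖 j} (∂_{𝕖 k} p)) := by
  have htri (i : Fin n) : l2Pairing (∂_{𝕖 k} (U j)) (schwartzMul (∂_{𝕖 k} (U i)) (∂_{𝕖 i} (U j)))
      = trilinearIntegral ![∂_{𝕖 k} (U j), ∂_{𝕖 k} (U i), ∂_{𝕖 i} (U j)] := by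
    simp only [l2Pairing_apply, schwartzMul_apply, ← mul_assoc]
    rfl
  simp only [lineDerivOp_nsRhs, map_sub, map_sum, map_add, Finset.sum_add_distrib, htri,
    sum_l2Pairing_lineDerivOp_lineDerivOp, sum_l2Pairing_transport_eq_zero hdiv, zero_add]

theorem sum_l2Pairing_lineDerivOp_nsRhs (hdiv : ∑ i : Fin n, ∂_{𝕖 i} (U i) = 0)
    (p : 𝓢(𝔼 n, ℝ)) :
    ∑ k : Fin n, ∑ j : Fin n, l2Pairing (∂_{𝕖 k} (U j)) (∂_{𝕖 k} (nsRhs U p j))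
      = -hessSq U - stretchForm U := by
  have hpressure (k : Fin n) :
      ∑ j : Fin n, l2Pairing (∂_{𝕖 k} (U j)) (∂_{𝕖 j} (∂_{𝕖 k} p)) = 0 := by
    refine sum_l2Pairing_grad_eq_zero (U := fun j => ∂_{𝕖 k} (U j)) ?_ (∂_{𝕖 k} p)
    simp only [lineDerivOp_comm _ (𝕖 k), ← LineDeriv.lineDerivOp_sum, hdiv,
      LineDeriv.lineDerivOp_zero]
  simp only [l2Pairing_lineDerivOp_nsRhs hdiv, Finset.sum_sub_distrib, hpressure,
    Finset.sum_neg_distrib, sub_zero, hessSq, gradSq, stretchForm]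

end EnergyIdentity

section TimeDerivative

section Slices

variable {E F : Type*} [NormedAddCommGroup E] [NormedSpace ℝ E] [NormedAddCommGroup F]
  [NormedSpace ℝ F] {U : ℝ × E → F} {t : ℝ} {x : E}

theorem hasFDerivAt_slice_right (hU : DifferentiableAt ℝ U (t, x)) :
    HasFDerivAt (fun y => U (t, y)) (fderiv ℝ U (t, x) ∘L ContinuousLinearMap.inr ℝ ℝ E) x :=
  hU.hasFDerivAt.comp x (hasFDerivAt_prodMk_right t x)

theorem hasDerivAt_slice_left (hU : DifferentiableAt ℝ U (t, x)) :
    HasDerivAt (fun s => U (s, x)) (fderiv ℝ U (t, x) (1, 0)) t := by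
  simpa [Function.comp_def] using
    hU.hasFDerivAt.comp_hasDerivAt t (hasFDerivAt_prodMk_left t x).hasDerivAt

theorem hasDerivAt_fderiv_slice (hU : ∀ᶠ q in 𝓝 (t, x), ContDiffAt ℝ 2 U q) (e : E) :
    HasDerivAt (fun s => fderiv ℝ (fun y => U (s, y)) x e)
      (fderiv ℝ (fun y => deriv (fun s => U (s, y)) t) x e) t := by
  have hUt : ContDiffAt ℝ 2 U (t, x) := hU.self_of_nhds
  have hdiff : ∀ᶠ q in 𝓝 (t, x), DifferentiableAt ℝ U q :=
    hU.mono fun q hq => hq.differentiableAt two_ne_zero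
  have hdiff₂ : DifferentiableAt ℝ (fderiv ℝ U) (t, x) :=
    (hUt.fderiv_right (m := 1) le_rfl).differentiableAt one_ne_zero
  have hspace : ∀ᶠ s in 𝓝 t,
      fderiv ℝ (fun y => U (s, y)) x e = fderiv ℝ U (s, x) (0, e) := by
    filter_upwards [((Continuous.prodMk_left x).tendsto t).eventually hdiff] with s hs
    rw [(hasFDerivAt_slice_right hs).fderiv]
    rfl
  have htime : (fun y => deriv (fun s => U (s, y)) t) =ᶠ[𝓝 x]
      fun y => fderiv ℝ U (t, y) (1, 0) := by
    filter_upwards [((Continuous.prodMk_right t).tendsto x).eventually hdiff] with y hy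
    exact (hasDerivAt_slice_left hy).deriv
  have hmixed : fderiv ℝ (fun y => fderiv ℝ U (t, y) (1, 0)) x e
      = fderiv ℝ (fderiv ℝ U) (t, x) (0, e) (1, 0) := by
    have hclm := (hasFDerivAt_slice_right hdiff₂).clm_apply (hasFDerivAt_const ((1 : ℝ), (0 : E)) x)
    rw [hclm.fderiv]
    simp
  rw [htime.fderiv_eq, hmixed, (hUt.isSymmSndFDerivAt (by simp)) (0, e) (1, 0)]
  refine HasDerivAt.congr_of_eventuallyEq ?_ hspace
  simpa using (hasDerivAt_slice_left hdiff₂).clm_apply (hasDerivAt_const t ((0 : ℝ), e))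

end Slices

section SchwartzBoundedUnder

variable {ι V F G : Type*} [NormedAddCommGroup V] [NormedSpace ℝ V] [NormedAddCommGroup F]
  [NormedSpace ℝ F] [NormedAddCommGroup G] [NormedSpace ℝ G] {l : Filter ι}

/-- A family of Schwartz functions which is eventually bounded along `l`, each continuous seminorm
being allowed its own element of `l`. -/
def SchwartzBoundedUnder (l : Filter ι) (f : ι → 𝓢(V, F)) : Prop :=
  ∀ q : Seminorm ℝ 𝓢(V, F), Continuous q → l.IsBoundedUnder (· ≤ ·) fun s => q (f s)

theorem schwartzBoundedUnder_of_seminorm {f : ι → 𝓢(V, F)}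
    (hf : ∀ k m, ∃ M, ∀ᶠ s in l, SchwartzMap.seminorm ℝ k m (f s) ≤ M) :
    SchwartzBoundedUnder l f := by
  intro q hq
  obtain ⟨S, C, -, hC⟩ := Seminorm.bound_of_continuous (schwartz_withSeminorms ℝ V F) q hq
  choose M hM using hf
  refine isBoundedUnder_of_eventually_le (a := C * ∑ i ∈ S, M i.1 i.2) ?_
  filter_upwards [(Finset.eventually_all S).2 fun i _ => hM i.1 i.2] with s hs
  calc q (f s) ≤ C * S.sup (schwartzSeminormFamily ℝ V F) (f s) := hC (f s)
    _ ≤ C * ∑ i ∈ S, M i.1 i.2 := by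
      gcongr
      exact (Seminorm.finset_sup_le_sum _ S (f s)).trans
        ((_root_.sum_apply S _ _).trans_le (Finset.sum_le_sum hs))

namespace SchwartzBoundedUnder

variable {f : ι → 𝓢(V, F)}

theorem clm_apply (hf : SchwartzBoundedUnder l f) (L : 𝓢(V, F) →L[ℝ] 𝓢(V, G)) :
    SchwartzBoundedUnder l fun s => L (f s) :=
  fun q hq => hf (q.comp L.toLinearMap) (hq.comp L.continuous)

theorem lineDerivOp (hf : SchwartzBoundedUnder l f) (v : V) :
    SchwartzBoundedUnder l fun s => ∂_{v} (f s) :=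
  hf.clm_apply (LineDeriv.lineDerivOpCLM ℝ 𝓢(V, F) v)

theorem isBigO_one_add_norm_rpow (hf : SchwartzBoundedUnder l f) (k : ℕ) :
    (fun q : ι × V => f q.1 q.2) =O[l ×ˢ ⊤] fun q => (1 + ‖q.2‖) ^ (-k : ℝ) := by
  obtain ⟨M, hM⟩ := hf ((Finset.Iic (k, 0)).sup (schwartzSeminormFamily ℝ V F))
    (Seminorm.continuous_finsetSup fun i _ => (schwartz_withSeminorms ℝ V F).continuous_seminorm i)
  refine Asymptotics.IsBigO.of_bound (2 ^ k * M) ?_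
  filter_upwards [(eventually_map.1 hM).prod_inl ⊤] with q hq
  have hpos : 0 < 1 + ‖q.2‖ := by positivity
  rw [Real.norm_of_nonneg (by positivity), Real.rpow_neg hpos.le, ← div_eq_mul_inv,
    le_div_iff₀' (by positivity), Real.rpow_natCast]
  have hdecay := SchwartzMap.one_add_le_sup_seminorm_apply (𝕜 := ℝ) (m := (k, 0)) le_rfl le_rfl
    (f q.1) q.2
  rw [norm_iteratedFDeriv_zero] at hdecay
  exact hdecay.trans (by gcongr; exact hq)

theorem isBigO_one (hf : SchwartzBoundedUnder l f) :
    (fun q : ι × V => f q.1 q.2) =O[l ×ˢ ⊤] fun _ => (1 : ℝ) := by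
  simpa using hf.isBigO_one_add_norm_rpow 0

end SchwartzBoundedUnder

end SchwartzBoundedUnder

section EnergyDerivative

variable {V : Type*} [NormedAddCommGroup V] [InnerProductSpace ℝ V] [FiniteDimensional ℝ V]
  [MeasurableSpace V] [BorelSpace V]

theorem hasDerivAt_l2sq {f g : ℝ → 𝓢(V, ℝ)} {t : ℝ}
    (hderiv : ∀ᶠ s in 𝓝 t, ∀ x, HasDerivAt (fun s => f s x) (g s x) s)
    (hf : SchwartzBoundedUnder (𝓝 t) f)
    (hg : (fun q : ℝ × V => g q.1 q.2) =O[𝓝 t ×ˢ ⊤] fun _ => (1 : ℝ)) :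
    HasDerivAt (fun s => l2sq (f s)) (2 * l2Pairing (f t) (g t)) t := by
  set m : ℕ := Module.finrank ℝ V + 1 with hm
  obtain ⟨C, hC⟩ := ((hf.isBigO_one_add_norm_rpow m).mul hg).bound
  rw [prod_top, eventually_comap] at hC
  have hbound : ∀ᶠ s in 𝓝 t, ∀ x, ‖2 * (f s x * g s x)‖ ≤ 2 * (C * (1 + ‖x‖) ^ (-m : ℝ)) := by
    filter_upwards [hC] with s hs x
    have hx := hs (s, x) rfl
    rw [mul_one, Real.norm_of_nonneg (by positivity : 0 ≤ (1 + ‖x‖) ^ (-m : ℝ))] at hx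
    rw [norm_mul, Real.norm_two]
    gcongr
  have hint : Integrable (fun x : V => 2 * (C * (1 + ‖x‖) ^ (-m : ℝ))) :=
    ((integrable_one_add_norm
      (by rw [hm]; exact_mod_cast Nat.lt_succ_self _)).const_mul C).const_mul 2
  rw [l2Pairing_apply, ← integral_const_mul]
  refine (hasDerivAt_integral_of_dominated_loc_of_deriv_le (F' := fun s x => 2 * (f s x * g s x))
    (hbound.and hderiv) (Eventually.of_forall fun s => ?_) (integrable_norm_sq_schwartz _)
    ?_ (Eventually.of_forall fun x s hs => hs.1 x) hint
    (Eventually.of_forall fun x s hs => ?_)).2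
  · exact (integrable_norm_sq_schwartz _).aestronglyMeasurable
  · exact ((integrable_schwartz_mul _ _).const_mul 2).aestronglyMeasurable
  · simp only [Real.norm_eq_abs, sq_abs]
    exact ((hs.2 x).fun_pow 2).congr_deriv (by ring)

end EnergyDerivative

section StrongSolution

variable {T t : ℝ} {u : ℝ → Fin 3 → 𝓢(E3, ℝ)} {p : ℝ → 𝓢(E3, ℝ)}

theorem pd_eq_lineDerivOp (i : Fin 3) (f : 𝓢(E3, ℝ)) : pd i f = ∂_{𝕖 i} f := rfl

namespace IsStrongSolution

theorem sum_lineDerivOp_eq_zero (h : IsStrongSolution T u p) (ht : t ∈ Set.Ico 0 T) :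
    ∑ i : Fin 3, ∂_{𝕖 i} (u t i) = 0 := by
  ext x
  simpa only [pd_eq_lineDerivOp, _root_.sum_apply, _root_.zero_apply] using h.divFree t ht x

theorem schwartzBoundedUnder_velocity (h : IsStrongSolution T u p) (ht : t ∈ Set.Ioo 0 T)
    (j : Fin 3) : SchwartzBoundedUnder (𝓝 t) fun s => u s j := by
  refine schwartzBoundedUnder_of_seminorm fun k m => ?_
  obtain ⟨ε, hε, M, hM⟩ := h.locBdd_u k m t ⟨ht.1.le, ht.2⟩
  refine ⟨M, ?_⟩
  filter_upwards [Ioo_mem_nhds ht.1 ht.2, Metric.ball_mem_nhds t hε] with s hs hsε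
  exact hM s ⟨hs.1.le, hs.2⟩ hsε j

theorem schwartzBoundedUnder_pressure (h : IsStrongSolution T u p) (ht : t ∈ Set.Ioo 0 T) :
    SchwartzBoundedUnder (𝓝 t) p := by
  refine schwartzBoundedUnder_of_seminorm fun k m => ?_
  obtain ⟨ε, hε, M, hM⟩ := h.locBdd_p k m t ⟨ht.1.le, ht.2⟩
  refine ⟨M, ?_⟩
  filter_upwards [Ioo_mem_nhds ht.1 ht.2, Metric.ball_mem_nhds t hε] with s hs hsε
  exact hM s ⟨hs.1.le, hs.2⟩ hsε

theorem isBigO_lineDerivOp_nsRhs (h : IsStrongSolution T u p) (ht : t ∈ Set.Ioo 0 T)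
    (k j : Fin 3) :
    (fun q : ℝ × E3 => ∂_{𝕖 k} (nsRhs (u q.1) (p q.1) j) q.2) =O[𝓝 t ×ˢ ⊤]
      fun _ => (1 : ℝ) := by
  have hu := h.schwartzBoundedUnder_velocity ht
  have hp := h.schwartzBoundedUnder_pressure ht
  have hmul {f g : ℝ → 𝓢(E3, ℝ)} (hf : SchwartzBoundedUnder (𝓝 t) f)
      (hg : SchwartzBoundedUnder (𝓝 t) g) :
      (fun q : ℝ × E3 => f q.1 q.2 * g q.1 q.2) =O[𝓝 t ×ˢ ⊤] fun _ => (1 : ℝ) := by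
    simpa using hf.isBigO_one.mul hg.isBigO_one
  simp only [lineDerivOp_nsRhs, _root_.sub_apply, _root_.sum_apply, _root_.add_apply,
    schwartzMul_apply]
  refine .sub (.sub (.fun_sum fun i _ => ?_) (.fun_sum fun i _ => ?_)) ?_
  · exact ((((hu j).lineDerivOp _).lineDerivOp _).lineDerivOp _).isBigO_one
  · exact (hmul (hu i) (((hu j).lineDerivOp _).lineDerivOp _)).add
      (hmul ((hu i).lineDerivOp _) ((hu j).lineDerivOp _))
  · exact ((hp.lineDerivOp _).lineDerivOp _).isBigO_one

theorem deriv_velocity_eq_nsRhs (h : IsStrongSolution T u p) (ht : t ∈ Set.Ioo 0 T) (j : Fin 3)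
    (x : E3) : deriv (fun s => u s j x) t = nsRhs (u t) (p t) j x := by
  have heqn := h.eqn t ht x j
  simp only [pd_eq_lineDerivOp] at heqn
  simp only [nsRhs, _root_.sub_apply, _root_.sum_apply, schwartzMul_apply]
  linarith

theorem hasDerivAt_lineDerivOp (h : IsStrongSolution T u p) (ht : t ∈ Set.Ioo 0 T)
    (k j : Fin 3) (x : E3) :
    HasDerivAt (fun s => ∂_{𝕖 k} (u s j) x) (∂_{𝕖 k} (nsRhs (u t) (p t) j) x) t := by
  have hopen : IsOpen (Set.Ioo 0 T ×ˢ (Set.univ : Set E3)) := isOpen_Ioo.prod isOpen_univ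
  have hsmooth : ∀ᶠ q in 𝓝 (t, x), ContDiffAt ℝ 2 (fun q : ℝ × E3 => u q.1 j q.2) q := by
    filter_upwards [hopen.mem_nhds ⟨ht, Set.mem_univ x⟩] with q hq
    exact (((h.smooth_u j).mono (Set.prod_mono_left Set.Ioo_subset_Ico_self)).contDiffAt
      (hopen.mem_nhds hq)).of_le (WithTop.coe_le_coe.2 le_top)
  have hslice := hasDerivAt_fderiv_slice hsmooth (𝕖 k)
  simpa only [h.deriv_velocity_eq_nsRhs ht, ← SchwartzMap.lineDerivOp_apply_eq_fderiv] using hslice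

theorem hasDerivAt_gradSq (h : IsStrongSolution T u p) (ht : t ∈ Set.Ioo 0 T) :
    HasDerivAt (fun s => gradSq (u s)) (2 * (-hessSq (u t) - stretchForm (u t))) t := by
  have hterm (j k : Fin 3) : HasDerivAt (fun s => l2sq (∂_{𝕖 k} (u s j)))
      (2 * l2Pairing (∂_{𝕖 k} (u t j)) (∂_{𝕖 k} (nsRhs (u t) (p t) j))) t := by
    refine hasDerivAt_l2sq (f := fun s => ∂_{𝕖 k} (u s j))
      (g := fun s => ∂_{𝕖 k} (nsRhs (u s) (p s) j)) ?_
      ((h.schwartzBoundedUnder_velocity ht j).lineDerivOp _) (h.isBigO_lineDerivOp_nsRhs ht k j)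
    filter_upwards [Ioo_mem_nhds ht.1 ht.2] with s hs
    exact h.hasDerivAt_lineDerivOp hs k j
  rw [← sum_l2Pairing_lineDerivOp_nsRhs (h.sum_lineDerivOp_eq_zero ⟨ht.1.le, ht.2⟩) (p t),
    Finset.sum_comm]
  simp only [Finset.mul_sum]
  exact HasDerivAt.fun_sum fun j _ => HasDerivAt.fun_sum fun k _ => hterm j k

end IsStrongSolution

end StrongSolution

end TimeDerivative

section Vorticity

theorem norm_le_of_eLpNorm_top_le {X F : Type*} [TopologicalSpace X] [MeasurableSpace X]
    {μ : Measure X} [μ.IsOpenPosMeasure] [NormedAddCommGroup F] {f : X → F} (hf : Continuous f)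
    {B : ℝ} (hB : 0 ≤ B) (h : eLpNorm f ⊤ μ ≤ ENNReal.ofReal B) (x : X) : ‖f x‖ ≤ B := by
  have hae : ∀ᵐ y ∂μ, ‖f y‖ ≤ B := by
    filter_upwards [ae_le_eLpNormEssSup (f := f) (μ := μ)] with y hy
    rw [← ENNReal.ofReal_le_ofReal_iff hB, ofReal_norm]
    exact hy.trans h
  have hclosed : IsClosed {y | ‖f y‖ ≤ B} := isClosed_le hf.norm continuous_const
  exact hclosed.closure_subset (Measure.dense_of_ae hae x)

theorem eLpNorm_two_rpow_two {V F : Type*} [NormedAddCommGroup V] [InnerProductSpace ℝ V]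
    [FiniteDimensional ℝ V] [MeasurableSpace V] [BorelSpace V] [NormedAddCommGroup F]
    [NormedSpace ℝ F] (f : 𝓢(V, F)) :
    eLpNorm f 2 volume ^ (2 : ℝ) = ENNReal.ofReal (l2sq f) := by
  have hroot : 0 ≤ l2sq f ^ (2⁻¹ : ℝ) := Real.rpow_nonneg (l2sq_nonneg f) _
  have hf : MemLp f 2 volume := f.memLp 2
  rw [hf.eLpNorm_eq_integral_rpow_norm two_ne_zero ENNReal.ofNat_ne_top]
  simp only [ENNReal.toReal_ofNat, Real.rpow_two]
  change ENNReal.ofReal (l2sq f ^ (2⁻¹ : ℝ)) ^ (2 : ℝ) = _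
  rw [ENNReal.ofReal_rpow_of_nonneg hroot zero_le_two, ← Real.rpow_mul (l2sq_nonneg f),
    inv_mul_cancel₀ two_ne_zero, Real.rpow_one]

section BlockBound

variable {n : ℕ} {χ : 𝔼 n → ℝ} {α r A : ℝ} {f : 𝓢(𝔼 n, ℂ)}

theorem blockBound_of_eLpNorm_Dproj_le (hχ : IsLPCutoff χ) (hA : 0 ≤ A)
    (h : ∀ j : ℤ, (2 : ℝ≥0∞) ^ ((j : ℝ) * -α) * eLpNorm (Dproj χ j f) ⊤ volume
      ≤ ENNReal.ofReal A) : BlockBound χ (2 ^ α) A f := by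
  intro j x
  have hblock : eLpNorm (Dproj χ j f) ⊤ volume ≤ ENNReal.ofReal (A * ((2 : ℝ) ^ α) ^ j) := by
    have hj := h j
    rw [mul_neg, ENNReal.rpow_neg, mul_comm, ← div_eq_mul_inv,
      ENNReal.div_le_iff (ENNReal.rpow_pos two_pos ENNReal.ofNat_ne_top).ne'
        (ENNReal.rpow_ne_top_of_ne_zero two_ne_zero ENNReal.ofNat_ne_top)] at hj
    refine hj.trans_eq ?_
    rw [ENNReal.ofReal_mul hA, ← Real.rpow_intCast, ← Real.rpow_mul two_pos.le, mul_comm α,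
      ← ENNReal.ofReal_rpow_of_pos two_pos, ENNReal.ofReal_ofNat]
  rw [← lowPass_succ_sub_eq_Dproj hχ] at hblock
  exact norm_le_of_eLpNorm_top_le (SchwartzMap.continuous _) (by positivity) hblock x

theorem BlockBound.neg (h : BlockBound χ r A f) : BlockBound χ r A (-f) := by
  intro j x
  simpa only [map_neg, _root_.neg_apply, neg_sub_neg, norm_sub_rev] using h j x

theorem blockBound_zero (hr : 0 ≤ r) (hA : 0 ≤ A) : BlockBound χ r A 0 := by
  intro j x
  simp only [map_zero, sub_self, norm_zero]
  positivity

end BlockBound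

theorem vorticityForm_swap {n : ℕ} {F : Type*} [NormedAddCommGroup F] [NormedSpace ℝ F]
    (U : Fin n → 𝓢(𝔼 n, F)) (a b : Fin n) : vorticityForm U b a = -vorticityForm U a b :=
  (neg_sub _ _).symm

theorem l2sq_vorticityForm_le {n : ℕ} (U : Fin n → 𝓢(𝔼 n, ℝ)) (a b : Fin n) :
    l2sq (vorticityForm U a b) ≤ 4 * gradSq U := by
  have hsub : l2sq (vorticityForm U a b)
      ≤ ∫ x, (2 * ‖∂_{𝕖 a} (U b) x‖ ^ 2 + 2 * ‖∂_{𝕖 b} (U a) x‖ ^ 2) := by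
    refine integral_mono (integrable_norm_sq_schwartz _)
      (((integrable_norm_sq_schwartz _).const_mul 2).add
        ((integrable_norm_sq_schwartz _).const_mul 2)) fun x => ?_
    have hnorm := norm_sub_le (∂_{𝕖 a} (U b) x) (∂_{𝕖 b} (U a) x)
    calc ‖vorticityForm U a b x‖ ^ 2
        ≤ (‖∂_{𝕖 a} (U b) x‖ + ‖∂_{𝕖 b} (U a) x‖) ^ 2 := by gcongr; exact hnorm
      _ ≤ 2 * ‖∂_{𝕖 a} (U b) x‖ ^ 2 + 2 * ‖∂_{𝕖 b} (U a) x‖ ^ 2 := by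
        linarith [add_sq_le (a := ‖∂_{𝕖 a} (U b) x‖) (b := ‖∂_{𝕖 b} (U a) x‖)]
  rw [integral_add ((integrable_norm_sq_schwartz _).const_mul 2)
    ((integrable_norm_sq_schwartz _).const_mul 2), integral_const_mul, integral_const_mul] at hsub
  change _ ≤ 2 * l2sq _ + 2 * l2sq _ at hsub
  linarith [l2sq_lineDerivOp_le_gradSq U a b, l2sq_lineDerivOp_le_gradSq U b a]

theorem curlS_eq_vorticityForm (u : Fin 3 → 𝓢(E3, ℝ)) (i : Fin 3) :
    curlS u i = vorticityForm u (i + 1) (i + 2) := by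
  fin_cases i <;> rfl

theorem vecL2_curlS_le (u : Fin 3 → 𝓢(E3, ℝ)) :
    vecL2 (curlS u) ≤ (3 * ENNReal.ofReal (4 * gradSq u)) ^ (1 / 2 : ℝ) := by
  have hcomp (i : Fin 3) : eLpNorm (curlS u i) 2 volume ^ (2 : ℝ)
      ≤ ENNReal.ofReal (4 * gradSq u) := by
    rw [curlS_eq_vorticityForm, eLpNorm_two_rpow_two]
    exact ENNReal.ofReal_le_ofReal (l2sq_vorticityForm_le u _ _)
  refine ENNReal.rpow_le_rpow ((Finset.sum_le_sum fun i _ => hcomp i).trans_eq ?_) (by norm_num)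
  simp

theorem blockBound_vorticityForm {χ : E3 → ℝ} (hχ : IsLPCutoff χ) {α A : ℝ} (hA : 0 ≤ A)
    {u : Fin 3 → 𝓢(E3, ℝ)} (h : vecBesovInf χ (-α) (curlS u) ≤ ENNReal.ofReal A) (a b : Fin 3) :
    BlockBound χ (2 ^ α) A (complexify (vorticityForm u a b)) := by
  have hcurl (i : Fin 3) :
      BlockBound χ (2 ^ α) A (complexify (vorticityForm u (i + 1) (i + 2))) := by
    refine blockBound_of_eLpNorm_Dproj_le hχ hA fun j => ?_
    have hij := (le_iSup₂ (f := fun (i : Fin 3) (j : ℤ) => (2 : ℝ≥0∞) ^ ((j : ℝ) * -α) *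
      eLpNorm (Dproj χ j fun x => ((curlS u i x : ℝ) : ℂ)) ⊤ volume) i j).trans h
    simpa only [curlS_eq_vorticityForm, ← complexify_apply] using hij
  have hindex : ∀ a b : Fin 3,
      a = b ∨ (∃ i, a = i + 1 ∧ b = i + 2) ∨ ∃ i, a = i + 2 ∧ b = i + 1 := by decide
  obtain rfl | ⟨i, rfl, rfl⟩ | ⟨i, rfl, rfl⟩ := hindex a b
  · rw [vorticityForm, sub_self, map_zero]
    exact blockBound_zero (by positivity) hA
  · exact hcurl i
  · rw [vorticityForm_swap, map_neg]
    exact (hcurl i).neg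

end Vorticity

section Gronwall

variable {a b : ℝ} {f f' : ℝ → ℝ} {g : ℝ → ℝ≥0∞}

theorem exists_forall_Ico_le_of_hasDerivAt (hg : ∫⁻ t in Set.Ico a b, g t ≠ ∞)
    (hf : ∀ t ∈ Set.Ico a b, HasDerivAt f (f' t) t)
    (hle : ∀ t ∈ Set.Ico a b, ENNReal.ofReal (f' t) ≤ g t) :
    ∃ B, ∀ t ∈ Set.Ico a b, f t ≤ B := by
  have hpos_nonneg : ∀ t, 0 ≤ max (deriv f t) 0 := fun t => le_max_right _ _
  have hint : IntegrableOn (fun t => max (deriv f t) 0) (Set.Ico a b) := by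
    refine ⟨((measurable_deriv f).max measurable_const).aestronglyMeasurable, ?_⟩
    rw [hasFiniteIntegral_iff_ofReal (Eventually.of_forall hpos_nonneg)]
    refine (setLIntegral_mono' measurableSet_Ico fun t ht => ?_).trans_lt (lt_top_iff_ne_top.2 hg)
    rw [ENNReal.ofReal_max, ENNReal.ofReal_zero, (hf t ht).deriv]
    exact max_le (hle t ht) bot_le
  refine ⟨f a + ∫ t in Set.Ico a b, max (deriv f t) 0, fun t ht => ?_⟩
  have hsub : Set.Icc a t ⊆ Set.Ico a b := Set.Icc_subset_Ico_right ht.2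
  have hsub' : Set.Ioo a t ⊆ Set.Ico a b := Set.Ioo_subset_Icc_self.trans hsub
  have hftc : f t - f a ≤ ∫ s in Set.Ioc a t, max (deriv f s) 0 := by
    rw [← intervalIntegral.integral_of_le ht.1]
    exact intervalIntegral.sub_le_integral_of_hasDeriv_right_of_le ht.1
      (fun s hs => (hf s (hsub hs)).continuousAt.continuousWithinAt)
      (fun s hs => (hf s (hsub' hs)).hasDerivWithinAt) (hint.mono_set hsub)
      (fun s hs => (hf s (hsub' hs)).deriv ▸ le_max_left _ _)
  have hmono := setIntegral_mono_set hint (Eventually.of_forall hpos_nonneg)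
    (Set.Ioc_subset_Icc_self.trans hsub).eventuallyLE
  linarith

theorem exists_forall_Ico_le_of_hasDerivAt_div (hg : ∫⁻ t in Set.Ico a b, g t ≠ ∞)
    (hf : ∀ t ∈ Set.Ico a b, HasDerivAt f (f' t) t) (hpos : ∀ t ∈ Set.Ico a b, 0 < f t)
    (hle : ∀ t ∈ Set.Ico a b, ENNReal.ofReal (f' t / f t) ≤ g t) :
    ∃ B, ∀ t ∈ Set.Ico a b, f t ≤ B := by
  obtain ⟨B, hB⟩ := exists_forall_Ico_le_of_hasDerivAt hg
    (fun t ht => (hf t ht).log (hpos t ht).ne') hle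
  exact ⟨Real.exp B, fun t ht => (Real.log_le_iff_le_exp (hpos t ht)).1 (hB t ht)⟩

end Gronwall

section BlowupCriterion

variable {χ : E3 → ℝ} {α T : ℝ}

theorem exists_ofReal_neg_stretchForm_div_le (hχ : IsLPCutoff χ) (hα : 0 < α) (hα2 : α < 2) :
    ∃ K : ℝ, ∀ u : Fin 3 → 𝓢(E3, ℝ), ∑ i : Fin 3, ∂_{𝕖 i} (u i) = 0 →
      ENNReal.ofReal (2 * (-hessSq u - stretchForm u) / (gradSq u + 1))
        ≤ ENNReal.ofReal K * vecBesovInf χ (-α) (curlS u) ^ (2 / (2 - α)) := by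
  obtain ⟨K, hK, hbound⟩ := exists_abs_stretchForm_le_rpow hχ hα hα2
  have hexp : 0 < 2 / (2 - α) := div_pos two_pos (by linarith)
  refine ⟨2 * K + 1, fun u hdiv => ?_⟩
  obtain htop | htop := eq_or_ne (vecBesovInf χ (-α) (curlS u)) ∞
  · rw [htop, ENNReal.top_rpow_of_pos hexp,
      ENNReal.mul_top (ENNReal.ofReal_pos.2 (by linarith)).ne']
    exact le_top
  · obtain ⟨A, hA, hAeq⟩ : ∃ A : ℝ, 0 ≤ A ∧ vecBesovInf χ (-α) (curlS u) = ENNReal.ofReal A :=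
      ⟨_, ENNReal.toReal_nonneg, (ENNReal.ofReal_toReal htop).symm⟩
    have hstretch : -stretchForm u ≤ K * A ^ (2 / (2 - α)) * gradSq u + hessSq u :=
      (neg_le_abs _).trans (hbound hA hdiv (blockBound_vorticityForm hχ hA hAeq.le))
    have hgrad := gradSq_nonneg u
    rw [hAeq, ENNReal.ofReal_rpow_of_nonneg hA hexp.le, ← ENNReal.ofReal_mul (by positivity)]
    refine ENNReal.ofReal_le_ofReal ((div_le_iff₀ (by positivity)).2 ?_)
    calc 2 * (-hessSq u - stretchForm u) ≤ 2 * K * A ^ (2 / (2 - α)) * gradSq u := by linarith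
      _ ≤ (2 * K + 1) * A ^ (2 / (2 - α)) * (gradSq u + 1) := by gcongr <;> linarith

variable {u : ℝ → Fin 3 → 𝓢(E3, ℝ)} {p : ℝ → 𝓢(E3, ℝ)}

theorem IsStrongSolution.exists_gradSq_le (hsol : IsStrongSolution T u p) (hT : 0 < T)
    (hχ : IsLPCutoff χ) (hα : 0 < α) (hα2 : α < 2)
    (hfin : ∫⁻ τ in Set.Ioo 0 T, vecBesovInf χ (-α) (curlS (u τ)) ^ (2 / (2 - α)) ≠ ∞) :
    ∃ M, ∀ t ∈ Set.Ico (T / 2) T, gradSq (u t) ≤ M := by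
  obtain ⟨K, hK⟩ := exists_ofReal_neg_stretchForm_div_le hχ hα hα2
  have hsub : Set.Ico (T / 2) T ⊆ Set.Ioo 0 T := Set.Ico_subset_Ioo_left (half_pos hT)
  have hint : ∫⁻ τ in Set.Ico (T / 2) T,
      ENNReal.ofReal K * vecBesovInf χ (-α) (curlS (u τ)) ^ (2 / (2 - α)) ≠ ∞ := by
    rw [lintegral_const_mul' _ _ ENNReal.ofReal_ne_top]
    exact ENNReal.mul_ne_top ENNReal.ofReal_ne_top
      (ne_top_of_le_ne_top hfin (lintegral_mono_set hsub))
  obtain ⟨M, hM⟩ := exists_forall_Ico_le_of_hasDerivAt_div hint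
    (fun t ht => (hsol.hasDerivAt_gradSq (hsub ht)).add_const 1)
    (fun t _ => add_pos_of_nonneg_of_pos (gradSq_nonneg (u t)) one_pos)
    (fun t ht => hK (u t) (hsol.sum_lineDerivOp_eq_zero (Set.Ioo_subset_Ico_self (hsub ht))))
  exact ⟨M, fun t ht => (le_add_of_nonneg_right zero_le_one).trans (hM t ht)⟩

theorem blowup_criterion_vorticity_besov_general (hχ : IsLPCutoff χ) (hα : 0 < α) (hα2 : α < 2)
    (hT : 0 < T) (hsol : IsStrongSolution T u p)
    (hblow : limsup (fun t => vecL2 (curlS (u t))) (𝓝[<] T) = ∞) :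
    ∫⁻ τ in Set.Ioo 0 T, vecBesovInf χ (-α) (curlS (u τ)) ^ (2 / (2 - α)) = ∞ := by
  by_contra hne
  obtain ⟨M, hM⟩ := hsol.exists_gradSq_le hT hχ hα hα2 hne
  have hle : limsup (fun t => vecL2 (curlS (u t))) (𝓝[<] T)
      ≤ (3 * ENNReal.ofReal (4 * M)) ^ (1 / 2 : ℝ) := by
    refine limsup_le_of_le (h := ?_)
    filter_upwards [Ico_mem_nhdsLT (half_lt_self hT)] with t ht
    refine (vecL2_curlS_le (u t)).trans ?_
    gcongr
    exact hM t ht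
  rw [hblow, top_le_iff] at hle
  exact ENNReal.rpow_ne_top_of_nonneg (by norm_num)
    (ENNReal.mul_ne_top (by norm_num) ENNReal.ofReal_ne_top) hle

end BlowupCriterion

/-- **Blow-up criterion (Corollary 3.1, quantitative contrapositive form)**: if the
`L²` norm of the vorticity of a strong solution of the Navier–Stokes equations blows
up at time `T`, i.e. `limsup_{t→T⁻} ‖ω(t)‖_{L²} = ∞`, then
`∫₀ᵀ (‖ω(τ)‖_{Ḃ^{-α}_{∞,∞}}^{2/(2-α)} + ‖ω(τ)‖_{Ḃ^{-1-α}_{∞,∞}}^{2/(1-α)}) dτ = ∞`. -/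
theorem blowup_criterion_vorticity_besov
    (χ : E3 → ℝ) (hχ : IsLPCutoff χ) (α T : ℝ) (hα : 0 < α) (hα1 : α < 1) (hT : 0 < T)
    (u : ℝ → Fin 3 → 𝓢(E3, ℝ)) (p : ℝ → 𝓢(E3, ℝ)) (hsol : IsStrongSolution T u p)
    (hblow : Filter.limsup (fun t => vecL2 (curlS (u t))) (nhdsWithin T (Set.Iio T)) = ∞) :
    vortBesovIntegral χ α T u = ∞ :=
  eq_top_mono (lintegral_mono fun _ => le_self_add)
    (blowup_criterion_vorticity_besov_general hχ hα (by linarith) hT hsol hblow)
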